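/- arXiv:1302.1601 — 5 statements merged into one kernel-verified Lean document; each statement's English description precedes it below -/
import Mathlib

section
/- Capacity region of the symmetric 5-message cyclic index coding problem. Consider the index coding problem with 5 messages and side information sets A_j = {j−1, j+1} (indices modulo 5), i.e., (1|5,2), (2|1,3), (3|2,4), (4|3,5), (5|4,1). Its capacity region is exactly the set of tuples (R_1,...,R_5) of nonnegative reals satisfying R_1 + R_3 ≤ 1, R_2 + R_4 ≤ 1, R_3 + R_5 ≤ 1, R_4 + R_1 ≤ 1, R_5 + R_2 ≤ 1, and R_1 + R_2 + R_3 + R_4 + R_5 ≤ 2. -/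
open Finset Filter

/-- Number of messages at rate `R` and block length `n`: `⌈2^{nR}⌉`. -/
noncomputable def msgCard (n : ℕ) (R : ℝ) : ℕ := ⌈(2 : ℝ) ^ ((n : ℝ) * R)⌉₊

/-- A `(2^{nR_1},…,2^{nR_N}, n)` index code for the index coding problem with
side information sets `A j`. -/
structure IndexCode (N : ℕ) (A : Fin N → Finset (Fin N)) (R : Fin N → ℝ) (n : ℕ) where
  enc : (∀ j : Fin N, Fin (msgCard n (R j))) → (Fin n → Bool)
  dec : ∀ j : Fin N, (Fin n → Bool) →
    (∀ k : {k : Fin N // k ∈ A j}, Fin (msgCard n (R k.1))) → Fin (msgCard n (R j))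

/-- Average probability of error of an index code (messages uniform). -/
noncomputable def IndexCode.Pe {N : ℕ} {A : Fin N → Finset (Fin N)} {R : Fin N → ℝ} {n : ℕ}
    (C : IndexCode N A R n) : ℝ :=
  (Nat.card {m : ∀ j : Fin N, Fin (msgCard n (R j)) //
      ∃ j : Fin N, C.dec j (C.enc m) (fun k => m k.1) ≠ m j} : ℝ) /
    (Nat.card (∀ j : Fin N, Fin (msgCard n (R j))) : ℝ)

/-- A rate tuple of nonnegative reals is achievable if there is a sequence of codes
whose probability of error tends to zero. -/
def IndexAchievable (N : ℕ) (A : Fin N → Finset (Fin N)) (R : Fin N → ℝ) : Prop :=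
  (∀ j, 0 ≤ R j) ∧
    ∃ C : (n : ℕ) → IndexCode N A R n, Tendsto (fun n => (C n).Pe) atTop (nhds 0)

/-!
**Converse.** Fix a code with error probability at most `1/2` and let `G` be the set of correctly
decoded message tuples, at least half of all tuples. If the side information graph is acyclic on
`S`, then on `G` the codeword and the messages outside `S` determine everything, which gives
`∑ j ∈ S, R j ≤ 1`. For the sum rate, fix the codeword and the messages `0` and `1`: in such a fibre
of `G` the tuple is determined by message `3`, and also by messages `2` and `4`. Multiplying these
two bounds and summing over the fibres by Cauchy–Schwarz plays the role of the submodularity of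
entropy.

**Achievability.** On a clique of the side information graph every receiver can recover its message
from the XOR of all messages in the clique, so time sharing between cliques achieves every rate
tuple with a fractional clique cover of total weight less than one. On the five-cycle, requiring the
two edges at each vertex to have total weight exactly the rate gives a linear system whose solution
has total weight `(∑ j, R j) / 2`. If a coordinate of this solution is negative, the corresponding
edge is dropped and the remaining path is covered greedily from both ends.
-/

section Counting

lemma card_image_le_card_of_factorsThrough {T α β : Type*} [DecidableEq α] [Fintype β]
    {G : Finset T} {f : T → α} {g : T → β} (h : ∀ s ∈ G, ∀ t ∈ G, g s = g t → f s = f t) :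
    #(G.image f) ≤ Fintype.card β := by
  classical
  obtain ⟨G', hG'G, hf, himage⟩ :=
    exists_subset_injOn_image_eq_of_surjOn (f := f) (G : Set T) (G.image f)
      (by rw [coe_image]; exact Set.surjOn_image f G)
  have hg : Set.InjOn g G' := fun s hs t ht hst ↦ hf hs ht (h s (hG'G hs) t (hG'G ht) hst)
  rw [← himage, card_image_of_injOn hf]
  exact card_le_card_of_injOn g (fun _ _ ↦ mem_univ _) hg

variable {T V P Q W : Type*} [DecidableEq V] [DecidableEq P] [DecidableEq Q] [DecidableEq W]

lemma card_image_prodMk (G : Finset T) (c : T → V) (p : T → P) :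
    #(G.image fun t ↦ (c t, p t)) = ∑ v ∈ G.image c, #({t ∈ G | c t = v}.image p) := by
  have hfst : Set.MapsTo Prod.fst (G.image fun t ↦ (c t, p t) : Set (V × P)) (G.image c) := by
    simp only [Set.MapsTo, coe_image, Set.mem_image, mem_coe]
    grind
  rw [card_eq_sum_card_fiberwise hfst]
  refine sum_congr rfl fun v _ ↦ ?_
  rw [← card_image_of_injective ({t ∈ G | c t = v}.image p) (Prod.mk_right_injective v)]
  refine congrArg card ?_
  ext ⟨u, y⟩
  simp only [mem_filter, mem_image, Prod.mk.injEq]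
  grind

lemma sq_card_le_mul_card_image_mul_card_image {G : Finset T} {c : T → V} {p : T → P} {q : T → Q}
    {r : T → W} (hpq : Set.InjOn (fun t ↦ (c t, p t, q t)) G)
    (hr : Set.InjOn (fun t ↦ (c t, r t)) G) :
    #G ^ 2 ≤ #(G.image r) *
      (#(G.image fun t ↦ (c t, p t)) * #(G.image fun t ↦ (c t, q t))) := by
  have fibre_le_mul (v : V) : #{t ∈ G | c t = v} ≤
      #({t ∈ G | c t = v}.image p) * #({t ∈ G | c t = v}.image q) := by
    rw [← card_product]
    refine card_le_card_of_injOn (fun t ↦ (p t, q t)) (fun t ht ↦ ?_) fun s hs t ht hst ↦ ?_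
    · exact mem_product.2 ⟨mem_image_of_mem p ht, mem_image_of_mem q ht⟩
    · simp only [coe_filter, Set.mem_ofPred_eq] at hs ht
      exact hpq hs.1 ht.1 (Prod.ext (hs.2.trans ht.2.symm) hst)
  have fibre_le (v : V) : #{t ∈ G | c t = v} ≤ #(G.image r) := by
    refine card_le_card_of_injOn r (fun t ht ↦ ?_) fun s hs t ht hst ↦ ?_
    · exact mem_image_of_mem r (mem_of_mem_filter t ht)
    · simp only [coe_filter, Set.mem_ofPred_eq] at hs ht
      exact hr hs.1 ht.1 (Prod.ext (hs.2.trans ht.2.symm) hst)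
  rw [card_image_prodMk G c p, card_image_prodMk G c q, card_eq_sum_card_image c G, ← mul_assoc,
    mul_sum _ _ #(G.image r)]
  refine sum_sq_le_sum_mul_sum_of_sq_le_mul _ (fun _ _ ↦ Nat.zero_le _)
    (fun _ _ ↦ Nat.zero_le _) fun v _ ↦ ?_
  rw [sq, mul_assoc]
  exact Nat.mul_le_mul (fibre_le v) (fibre_le_mul v)

end Counting

/-- The encoder `x` lets every receiver `j`, who knows the messages in `A j`, recover message `j` as
long as the message tuple is known to lie in `G`. This is the part of an index code that does not
mention rates: `x` takes values in an arbitrary type, and the decoders are replaced by the condition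
that they exist. -/
def Decodable {ι X : Type*} {M : ι → Type*} (A : ι → Finset ι) (x : (∀ i, M i) → X)
    (G : Set (∀ i, M i)) : Prop :=
  ∀ ⦃s⦄, s ∈ G → ∀ ⦃t⦄, t ∈ G → x s = x t → ∀ j, (∀ k ∈ A j, s k = t k) → s j = t j

namespace Decodable

variable {ι X Y : Type*} {M : ι → Type*} {A : ι → Finset ι} {x : (∀ i, M i) → X}

lemma comp_injective {G : Set (∀ i, M i)} (hx : Decodable A x G) {f : X → Y}
    (hf : Function.Injective f) : Decodable A (f ∘ x) G :=
  fun _ hs _ ht hst ↦ hx hs ht (hf hst)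

lemma card_le_of_acyclic [Fintype ι] [DecidableEq ι] [Fintype X] [∀ i, Fintype (M i)]
    {G : Finset (∀ i, M i)} (hx : Decodable A x G) {S : Finset ι}
    (hS : (S : Set ι).WellFoundedOn fun k j ↦ k ∈ A j) :
    #G ≤ Fintype.card X * ∏ i ∈ Sᶜ, Fintype.card (M i) := by
  have hinj : Set.InjOn (fun t ↦ (x t, fun i : (Sᶜ : Finset ι) ↦ t i)) G := by
    intro s hs t ht hst
    obtain ⟨hxst, hrestrict⟩ := Prod.mk.inj hst
    have hout (i : ι) (hi : i ∉ S) : s i = t i := congrFun hrestrict ⟨i, mem_compl.2 hi⟩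
    have hin (i : ι) (hi : i ∈ S) : s i = t i :=
      hS.induction hi fun j _ ih ↦ hx hs ht hxst j fun k hk ↦
        if hkS : k ∈ S then ih k hkS hk else hout k hkS
    exact funext fun i ↦ if hi : i ∈ S then hin i hi else hout i hi
  calc #G ≤ #(univ : Finset (X × ∀ i : (Sᶜ : Finset ι), M i)) :=
        card_le_card_of_injOn _ (fun _ _ ↦ mem_univ _) hinj
    _ = _ := by
        rw [card_univ, Fintype.card_prod, Fintype.card_pi,
          prod_coe_sort Sᶜ fun i ↦ Fintype.card (M i)]

end Decodable

/-- Receiver `j` knows the messages of its two neighbours on the cycle of length `5`. -/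
abbrev fiveCycle : Fin 5 → Finset (Fin 5) := fun j ↦ {j - 1, j + 1}

lemma wellFoundedOn_fiveCycle (j : Fin 5) :
    (({j, j + 2} : Finset (Fin 5)) : Set (Fin 5)).WellFoundedOn fun k i ↦ k ∈ fiveCycle i := by
  have independent : ∀ j : Fin 5, ∀ i ∈ ({j, j + 2} : Finset (Fin 5)),
      ∀ k ∈ ({j, j + 2} : Finset (Fin 5)), k ∉ fiveCycle i := by decide
  exact ⟨fun i ↦ ⟨i, fun k hk ↦ (independent j i i.2 k k.2 hk).elim⟩⟩

lemma Decodable.sq_card_le_of_fiveCycle {X : Type*} {M : Fin 5 → Type*} [Fintype X]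
    [∀ i, Fintype (M i)] {x : (∀ i, M i) → X} {G : Finset (∀ i, M i)}
    (hx : Decodable fiveCycle x G) :
    #G ^ 2 ≤ Fintype.card X ^ 2 * ∏ i, Fintype.card (M i) := by
  classical
  have decode (j : Fin 5) {s t} (hs : s ∈ G) (ht : t ∈ G) (hst : x s = x t)
      (hprev : s (j - 1) = t (j - 1)) (hnext : s (j + 1) = t (j + 1)) : s j = t j :=
    hx hs ht hst j (by simp [hprev, hnext])
  have eq_of_coords {s t : ∀ i, M i} (h0 : s 0 = t 0) (h1 : s 1 = t 1) (h2 : s 2 = t 2)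
      (h3 : s 3 = t 3) (h4 : s 4 = t 4) : s = t := by
    funext i
    fin_cases i <;> assumption
  have by_two_four : Set.InjOn (fun t ↦ ((x t, t 0, t 1), t 2, t 4)) G := by
    intro s hs t ht hst
    obtain ⟨⟨hxst, h0, h1⟩, h2, h4⟩ : (x s = x t ∧ s 0 = t 0 ∧ s 1 = t 1) ∧
      s 2 = t 2 ∧ s 4 = t 4 := by simpa using hst
    exact eq_of_coords h0 h1 h2 (decode 3 hs ht hxst h2 h4) h4
  have by_three : Set.InjOn (fun t ↦ ((x t, t 0, t 1), t 3)) G := by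
    intro s hs t ht hst
    obtain ⟨⟨hxst, h0, h1⟩, h3⟩ : (x s = x t ∧ s 0 = t 0 ∧ s 1 = t 1) ∧ s 3 = t 3 := by
      simpa using hst
    exact eq_of_coords h0 h1 (decode 2 hs ht hxst h1 h3) h3 (decode 4 hs ht hxst h3 h0)
  have drop_one : #(G.image fun t ↦ ((x t, t 0, t 1), t 2)) ≤ Fintype.card (X × M 0 × M 2) := by
    refine card_image_le_card_of_factorsThrough (g := fun t ↦ (x t, t 0, t 2)) ?_
    intro s hs t ht hst
    obtain ⟨hxst, h0, h2⟩ : x s = x t ∧ s 0 = t 0 ∧ s 2 = t 2 := by simpa using hst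
    simp only [hxst, h0, decode 1 hs ht hxst h0 h2, h2]
  have drop_zero : #(G.image fun t ↦ ((x t, t 0, t 1), t 4)) ≤ Fintype.card (X × M 1 × M 4) := by
    refine card_image_le_card_of_factorsThrough (g := fun t ↦ (x t, t 1, t 4)) ?_
    intro s hs t ht hst
    obtain ⟨hxst, h1, h4⟩ : x s = x t ∧ s 1 = t 1 ∧ s 4 = t 4 := by simpa using hst
    simp only [hxst, decode 0 hs ht hxst h4 h1, h1, h4]
  calc #G ^ 2
      ≤ #(G.image fun t ↦ t 3) * (#(G.image fun t ↦ ((x t, t 0, t 1), t 2)) *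
          #(G.image fun t ↦ ((x t, t 0, t 1), t 4))) :=
        sq_card_le_mul_card_image_mul_card_image by_two_four by_three
    _ ≤ Fintype.card (M 3) * (Fintype.card (X × M 0 × M 2) * Fintype.card (X × M 1 × M 4)) := by
        gcongr
        exact card_le_univ _
    _ = Fintype.card X ^ 2 * ∏ i, Fintype.card (M i) := by
        simp only [Fintype.card_prod, Fin.prod_univ_five]
        ring

section Cliques

variable {ι κ : Type*}

/-- Every receiver in `K` knows all the other messages in `K`: a clique of the side information
graph. -/
def IsSideInfoClique [DecidableEq ι] (A : ι → Finset ι) (K : Finset ι) : Prop :=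
  ∀ j ∈ K, K ⊆ insert j (A j)

lemma IsSideInfoClique.eq_of_sum_eq [DecidableEq ι] {A : ι → Finset ι} {K : Finset ι}
    (hK : IsSideInfoClique A K) {M : ι → Type*} {Z : Type*} [AddCommGroup Z] {f : ∀ i, M i → Z}
    {s t : ∀ i, M i} (hsum : ∑ i ∈ K, f i (s i) = ∑ i ∈ K, f i (t i)) {j : ι} (hj : j ∈ K)
    (hst : ∀ k ∈ A j, s k = t k) : f j (s j) = f j (t j) := by
  have hrest : ∑ i ∈ K.erase j, f i (s i) = ∑ i ∈ K.erase j, f i (t i) :=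
    sum_congr rfl fun k hk ↦ by
      rw [hst k (mem_of_mem_insert_of_ne (hK j hj (mem_of_mem_erase hk)) (ne_of_mem_erase hk))]
  rw [← add_sum_erase K _ hj, ← add_sum_erase K _ hj, hrest] at hsum
  exact add_right_cancel hsum

lemma exists_decodable_of_cliques [DecidableEq ι] [Fintype κ] {A : ι → Finset ι}
    {K : κ → Finset ι} (hK : ∀ c, IsSideInfoClique A (K c)) {M : ι → Type*} [∀ i, Fintype (M i)]
    {Z : κ → Type*} [∀ c, AddCommGroup (Z c)] [∀ c, Fintype (Z c)]
    (hcard : ∀ j, Fintype.card (M j) ≤ ∏ c with j ∈ K c, Fintype.card (Z c)) :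
    ∃ x : (∀ i, M i) → ∀ c, Z c, Decodable A x Set.univ := by
  classical
  have split (j : ι) : Nonempty (M j ↪ ∀ c : {c // j ∈ K c}, Z c) := by
    refine Function.Embedding.nonempty_of_card_le ?_
    rw [Fintype.card_pi,
      ← prod_subtype {c | j ∈ K c} (by simp) fun c ↦ Fintype.card (Z c)]
    exact hcard j
  let part (c : κ) (j : ι) (m : M j) : Z c := if hj : j ∈ K c then (split j).some m ⟨c, hj⟩ else 0
  refine ⟨fun m c ↦ ∑ i ∈ K c, part c i (m i), fun s _ t _ hst j hside ↦ ?_⟩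
  refine (split j).some.injective (funext fun ⟨c, hj⟩ ↦ ?_)
  have hpart : part c j (s j) = part c j (t j) :=
    (hK c).eq_of_sum_eq (congrFun hst c) hj hside
  simpa only [part, dif_pos hj] using hpart

end Cliques

section MessageCount

lemma two_rpow_le_msgCard (n : ℕ) (R : ℝ) : (2 : ℝ) ^ (n * R) ≤ msgCard n R := Nat.le_ceil _

instance (n : ℕ) (R : ℝ) : NeZero (msgCard n R) :=
  ⟨(Nat.ceil_pos.2 (Real.rpow_pos_of_pos two_pos _)).ne'⟩

lemma prod_msgCard_pos {ι : Type*} (n : ℕ) (R : ι → ℝ) (S : Finset ι) :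
    0 < ∏ j ∈ S, msgCard n (R j) :=
  prod_pos fun _ _ ↦ NeZero.pos _

lemma msgCard_le_two_pow {n k : ℕ} {R : ℝ} (h : n * R ≤ k) : msgCard n R ≤ 2 ^ k := by
  refine Nat.ceil_le.2 ?_
  calc (2 : ℝ) ^ (n * R) ≤ 2 ^ (k : ℝ) := Real.rpow_le_rpow_of_exponent_le one_le_two h
    _ = (2 ^ k : ℕ) := by rw [Real.rpow_natCast, Nat.cast_pow, Nat.cast_ofNat]

lemma sum_le_of_eventually_prod_msgCard_le {ι : Type*} {S : Finset ι} {R : ι → ℝ} {a b : ℕ}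
    (h : ∀ᶠ n in atTop, ∏ j ∈ S, msgCard n (R j) ≤ 2 ^ (a * n + b)) : ∑ j ∈ S, R j ≤ a := by
  have hlim : Tendsto (fun n : ℕ ↦ a + (b : ℝ) / n) atTop (nhds a) := by
    simpa using (tendsto_const_div_atTop_nhds_zero_nat (b : ℝ)).const_add (a : ℝ)
  refine ge_of_tendsto hlim ?_
  filter_upwards [h, eventually_gt_atTop 0] with n hn hpos
  have hpos : (0 : ℝ) < n := Nat.cast_pos.2 hpos
  have hexp : n * ∑ j ∈ S, R j ≤ a * n + b := by
    rw [← Real.rpow_le_rpow_left_iff one_lt_two]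
    calc (2 : ℝ) ^ (n * ∑ j ∈ S, R j) = ∏ j ∈ S, (2 : ℝ) ^ (n * R j) := by
          rw [mul_sum, Real.rpow_sum_of_pos two_pos]
      _ ≤ ∏ j ∈ S, (msgCard n (R j) : ℝ) := by
          gcongr
          exact two_rpow_le_msgCard n _
      _ ≤ 2 ^ (a * n + b) := mod_cast hn
      _ = 2 ^ (a * n + b : ℝ) := mod_cast (Real.rpow_natCast 2 (a * n + b)).symm
  calc ∑ j ∈ S, R j ≤ (a * n + b) / n := by rwa [le_div_iff₀' hpos]
    _ = a + b / n := by field_simp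

end MessageCount

namespace IndexCode

variable {N n : ℕ} {A : Fin N → Finset (Fin N)} {R : Fin N → ℝ}

open Classical in
/-- The message tuples that all receivers decode correctly. -/
noncomputable def correct (C : IndexCode N A R n) : Finset (∀ j, Fin (msgCard n (R j))) :=
  {m | ∀ j, C.dec j (C.enc m) (fun k ↦ m k) = m j}

lemma mem_correct {C : IndexCode N A R n} {m : ∀ j, Fin (msgCard n (R j))} :
    m ∈ C.correct ↔ ∀ j, C.dec j (C.enc m) (fun k ↦ m k) = m j := by
  simp [correct]

lemma decodable_correct (C : IndexCode N A R n) : Decodable A C.enc C.correct := by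
  intro s hs t ht hst j hside
  rw [← mem_correct.1 hs j, ← mem_correct.1 ht j, hst]
  exact congrArg (C.dec j (C.enc t)) (funext fun k ↦ hside k.1 k.2)

lemma card_correct (C : IndexCode N A R n) :
    (#C.correct : ℝ) = (1 - C.Pe) * ∏ j, (msgCard n (R j) : ℝ) := by
  classical
  have hfail : Nat.card {m // ∃ j, C.dec j (C.enc m) (fun k ↦ m k) ≠ m j} = #C.correctᶜ := by
    rw [Nat.card_eq_fintype_card, Fintype.card_subtype]
    congr 1
    ext m
    simp [mem_correct]
  have htotal : Nat.card (∀ j, Fin (msgCard n (R j))) = ∏ j, msgCard n (R j) := by simp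
  have hsplit : #C.correct + #C.correctᶜ = ∏ j, msgCard n (R j) := by
    rw [card_add_card_compl, Fintype.card_pi]
    simp
  have hprod : (∏ j, (msgCard n (R j) : ℝ)) ≠ 0 := mod_cast (prod_msgCard_pos n R univ).ne'
  have hsplit' : (#C.correct : ℝ) + #C.correctᶜ = ∏ j, (msgCard n (R j) : ℝ) := mod_cast hsplit
  rw [Pe, hfail, htotal, Nat.cast_prod, sub_mul, div_mul_cancel₀ _ hprod]
  linarith

lemma exists_Pe_eq_zero {x : (∀ j, Fin (msgCard n (R j))) → Fin n → Bool}
    (hx : Decodable A x Set.univ) : ∃ C : IndexCode N A R n, C.Pe = 0 := by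
  let observe (j : Fin N) (m : ∀ j, Fin (msgCard n (R j))) :
      (Fin n → Bool) × (∀ k : {k // k ∈ A j}, Fin (msgCard n (R k))) := (x m, fun k ↦ m k)
  have determined (j : Fin N) : Function.FactorsThrough (fun m ↦ m j) (observe j) :=
    fun s t hst ↦ hx (Set.mem_univ s) (Set.mem_univ t) (congrArg Prod.fst hst) j
      fun k hk ↦ congrFun (congrArg Prod.snd hst) ⟨k, hk⟩
  let C : IndexCode N A R n :=
    { enc := x
      dec j y a := Function.extend (observe j) (fun m ↦ m j) (fun _ ↦ 0) (y, a) }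
  have hcorrect : C.correct = univ := eq_univ_of_forall fun m ↦
    mem_correct.2 fun j ↦ (determined j).extend_apply (fun _ ↦ 0) m
  have hprod : (∏ j, (msgCard n (R j) : ℝ)) ≠ 0 := mod_cast (prod_msgCard_pos n R univ).ne'
  have hcard : ∏ j, (msgCard n (R j) : ℝ) = (1 - C.Pe) * ∏ j, (msgCard n (R j) : ℝ) := by
    simpa [hcorrect] using C.card_correct
  exact ⟨C, sub_eq_self.1 ((right_eq_mul₀ hprod).1 hcard)⟩

end IndexCode

namespace IndexAchievable

variable {N : ℕ} {A : Fin N → Finset (Fin N)} {R : Fin N → ℝ}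

lemma eventually_exists_decodable (h : IndexAchievable N A R) :
    ∀ᶠ n in atTop, ∃ (x : (∀ j, Fin (msgCard n (R j))) → Fin n → Bool)
      (G : Finset (∀ j, Fin (msgCard n (R j)))),
      Decodable A x G ∧ ∏ j, msgCard n (R j) ≤ 2 * #G := by
  obtain ⟨-, C, hC⟩ := h
  filter_upwards [hC.eventually_le_const one_half_pos] with n hn
  refine ⟨(C n).enc, (C n).correct, (C n).decodable_correct, ?_⟩
  have hprod : (0 : ℝ) ≤ ∏ j, (msgCard n (R j) : ℝ) := by positivity
  have : ∏ j, (msgCard n (R j) : ℝ) ≤ 2 * #(C n).correct := by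
    rw [IndexCode.card_correct]
    nlinarith
  exact_mod_cast this

lemma of_eventually_decodable (hR : ∀ j, 0 ≤ R j)
    (h : ∀ᶠ n in atTop, ∃ x : (∀ j, Fin (msgCard n (R j))) → Fin n → Bool,
      Decodable A x Set.univ) : IndexAchievable N A R := by
  have (n : ℕ) : ∃ C : IndexCode N A R n,
      (∃ x : (∀ j, Fin (msgCard n (R j))) → Fin n → Bool, Decodable A x Set.univ) → C.Pe = 0 := by
    by_cases hn : ∃ x : (∀ j, Fin (msgCard n (R j))) → Fin n → Bool, Decodable A x Set.univ
    · obtain ⟨C, hC⟩ := IndexCode.exists_Pe_eq_zero hn.choose_spec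
      exact ⟨C, fun _ ↦ hC⟩
    · exact ⟨⟨fun _ _ ↦ false, fun _ _ _ ↦ 0⟩, fun hx ↦ (hn hx).elim⟩
  choose C hC using this
  exact ⟨hR, C, tendsto_const_nhds.congr' (h.mono fun n hn ↦ (hC n hn).symm)⟩

lemma sum_le_one_of_acyclic (h : IndexAchievable N A R) {S : Finset (Fin N)}
    (hS : (S : Set (Fin N)).WellFoundedOn fun k j ↦ k ∈ A j) : ∑ j ∈ S, R j ≤ 1 := by
  refine (sum_le_of_eventually_prod_msgCard_le (a := 1) (b := 1) ?_).trans_eq Nat.cast_one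
  filter_upwards [h.eventually_exists_decodable] with n ⟨x, G, hx, hG⟩
  refine Nat.le_of_mul_le_mul_right ?_ (prod_msgCard_pos n R Sᶜ)
  calc (∏ j ∈ S, msgCard n (R j)) * ∏ j ∈ Sᶜ, msgCard n (R j) = ∏ j, msgCard n (R j) :=
        prod_mul_prod_compl S _
    _ ≤ 2 * #G := hG
    _ ≤ 2 * (2 ^ n * ∏ j ∈ Sᶜ, msgCard n (R j)) := by
        gcongr
        simpa using hx.card_le_of_acyclic hS
    _ = 2 ^ (1 * n + 1) * ∏ j ∈ Sᶜ, msgCard n (R j) := by ring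

lemma sum_le_two_of_fiveCycle {R : Fin 5 → ℝ} (h : IndexAchievable 5 fiveCycle R) :
    ∑ j, R j ≤ 2 := by
  refine (sum_le_of_eventually_prod_msgCard_le (a := 2) (b := 2) ?_).trans_eq Nat.cast_ofNat
  filter_upwards [h.eventually_exists_decodable] with n ⟨x, G, hx, hG⟩
  refine Nat.le_of_mul_le_mul_right ?_ (prod_msgCard_pos n R univ)
  calc (∏ j, msgCard n (R j)) * ∏ j, msgCard n (R j) ≤ (2 * #G) * (2 * #G) := by gcongr
    _ = 4 * #G ^ 2 := by ring
    _ ≤ 4 * ((2 ^ n) ^ 2 * ∏ j, msgCard n (R j)) := by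
        gcongr
        simpa using hx.sq_card_le_of_fiveCycle
    _ = 2 ^ (2 * n + 2) * ∏ j, msgCard n (R j) := by ring

variable {κ : Type*} [Fintype κ] {K : κ → Finset (Fin N)} {w : κ → ℝ}

lemma of_cliques (hK : ∀ c, IsSideInfoClique A (K c)) (hR0 : ∀ j, 0 ≤ R j) (hw : ∀ c, 0 ≤ w c)
    (hw1 : ∑ c, w c < 1) (hR : ∀ j, R j ≤ ∑ c with j ∈ K c, w c) : IndexAchievable N A R := by
  refine of_eventually_decodable hR0 ?_
  have hlim : Tendsto (fun n : ℕ ↦ n * (1 - ∑ c, w c)) atTop atTop :=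
    tendsto_natCast_atTop_atTop.atTop_mul_const (sub_pos.2 hw1)
  filter_upwards [hlim.eventually_ge_atTop (Fintype.card κ : ℝ)] with n hn
  let k (c : κ) : ℕ := ⌈n * w c⌉₊
  have hlength : ∑ c, k c ≤ n := by
    have : ∑ c, (k c : ℝ) ≤ n := calc
      ∑ c, (k c : ℝ) ≤ ∑ c, (n * w c + 1) :=
        sum_le_sum fun c _ ↦ (Nat.ceil_lt_add_one (mul_nonneg n.cast_nonneg (hw c))).le
      _ = n * ∑ c, w c + Fintype.card κ := by simp [sum_add_distrib, mul_sum]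
      _ ≤ n := by linarith
    exact_mod_cast this
  have hcount (j : Fin N) : msgCard n (R j) ≤ 2 ^ ∑ c with j ∈ K c, k c := by
    refine msgCard_le_two_pow ?_
    calc n * R j ≤ n * ∑ c with j ∈ K c, w c := by gcongr; exact hR j
      _ = ∑ c with j ∈ K c, n * w c := mul_sum ..
      _ ≤ ∑ c with j ∈ K c, (k c : ℝ) := sum_le_sum fun c _ ↦ Nat.le_ceil _
      _ = (∑ c with j ∈ K c, k c : ℕ) := (Nat.cast_sum ..).symm
  obtain ⟨x, hx⟩ := exists_decodable_of_cliques hK (M := fun j ↦ Fin (msgCard n (R j)))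
    (Z := fun c ↦ Fin (k c) → ZMod 2) fun j ↦ by simpa [prod_pow_eq_pow_sum] using hcount j
  obtain ⟨f⟩ : Nonempty ((∀ c, Fin (k c) → ZMod 2) ↪ (Fin n → Bool)) := by
    classical
    refine Function.Embedding.nonempty_of_card_le ?_
    simpa [prod_pow_eq_pow_sum] using Nat.pow_le_pow_right two_pos hlength
  exact ⟨f ∘ x, hx.comp_injective f.injective⟩

lemma mem_closure_of_cliques (hK : ∀ c, IsSideInfoClique A (K c)) (hR0 : ∀ j, 0 ≤ R j)
    (hw : ∀ c, 0 ≤ w c) (hw1 : ∑ c, w c ≤ 1) (hR : ∀ j, R j ≤ ∑ c with j ∈ K c, w c) :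
    R ∈ closure {R | IndexAchievable N A R} := by
  have hlim : Tendsto (fun a : ℝ ↦ a • R) (nhdsWithin 1 (Set.Iio 1)) (nhds R) :=
    ((continuous_id.smul continuous_const).tendsto' 1 R (one_smul ℝ R)).mono_left
      nhdsWithin_le_nhds
  refine mem_closure_of_tendsto hlim ?_
  filter_upwards [Ioo_mem_nhdsLT zero_lt_one] with a ⟨ha0, ha1⟩
  refine of_cliques (w := a • w) hK (fun j ↦ mul_nonneg ha0.le (hR0 j))
    (fun c ↦ mul_nonneg ha0.le (hw c)) ?_ fun j ↦ ?_
  · simp only [Pi.smul_apply, smul_eq_mul, ← mul_sum]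
    nlinarith
  · simp only [Pi.smul_apply, smul_eq_mul, ← mul_sum]
    exact mul_le_mul_of_nonneg_left (hR j) ha0.le

end IndexAchievable

section EdgeCover

/-- A fractional edge cover, of total weight at most one, of the demands `R` on the vertices of the
cycle of length `N`; `w j` is the weight of the edge from `j` to `j + 1`. -/
structure IsCycleEdgeCover {N : ℕ} [NeZero N] (R w : Fin N → ℝ) : Prop where
  nonneg : ∀ j, 0 ≤ w j
  sum_le_one : ∑ j, w j ≤ 1
  le_add : ∀ j, R j ≤ w j + w (j - 1)

namespace IsCycleEdgeCover

lemma of_rotate {N : ℕ} [NeZero N] {R w : Fin N → ℝ} (i : Fin N)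
    (h : IsCycleEdgeCover (fun j ↦ R (j + i)) w) :
    IsCycleEdgeCover R fun j ↦ w (j - i) where
  nonneg j := h.nonneg _
  sum_le_one := ((Equiv.subRight i).sum_comp w).trans_le h.sum_le_one
  le_add j := by simpa [sub_right_comm] using h.le_add (j - i)

variable {R : Fin 5 → ℝ}

lemma exists_of_dominated (hR : ∀ j, 0 ≤ R j) (hpair : ∀ j, R j + R (j + 2) ≤ 1)
    (hdom : R 0 + R 1 + R 3 ≤ R 2 + R 4) : ∃ w, IsCycleEdgeCover R w := by
  have h24 : R 2 + R 4 ≤ 1 := hpair 2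
  have h41 : R 4 + R 1 ≤ 1 := hpair 4
  have h02 : R 0 + R 2 ≤ 1 := hpair 0
  refine ⟨![0, R 1, max 0 (R 2 - R 1), max 0 (R 4 - R 0), R 0], ⟨fun j ↦ ?_, ?_, fun j ↦ ?_⟩⟩
  · fin_cases j <;> simp [hR]
  · rw [Fin.sum_univ_five]
    change 0 + R 1 + max 0 (R 2 - R 1) + max 0 (R 4 - R 0) + R 0 ≤ 1
    rcases max_cases 0 (R 2 - R 1) with ⟨h, _⟩ | ⟨h, _⟩ <;>
      rcases max_cases 0 (R 4 - R 0) with ⟨h', _⟩ | ⟨h', _⟩ <;> linarith [hR 3]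
  · have hleft := le_max_right 0 (R 2 - R 1)
    have hright := le_max_right 0 (R 4 - R 0)
    fin_cases j
    · change R 0 ≤ 0 + R 0
      linarith
    · change R 1 ≤ R 1 + 0
      linarith
    · change R 2 ≤ max 0 (R 2 - R 1) + R 1
      linarith
    · change R 3 ≤ max 0 (R 4 - R 0) + max 0 (R 2 - R 1)
      linarith
    · change R 4 ≤ R 0 + max 0 (R 4 - R 0)
      linarith

lemma exists_of_sum_le_two (hsum : ∑ j, R j ≤ 2)
    (hdom : ∀ j, R (j + 2) + R (j + 4) ≤ R j + R (j + 1) + R (j + 3)) :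
    ∃ w, IsCycleEdgeCover R w := by
  refine ⟨fun j ↦ (R j + R (j + 1) + R (j + 3) - R (j + 2) - R (j + 4)) / 2,
    ⟨fun j ↦ by linarith [hdom j], ?_, fun j ↦ ?_⟩⟩
  · have h (i : Fin 5) : ∑ j, R (j + i) = ∑ j, R j := Equiv.sum_comp (Equiv.addRight i) R
    simp only [← sum_div, sum_sub_distrib, sum_add_distrib, h]
    linarith
  · rw [sub_add_cancel, show j - 1 + 3 = j + 2 by grind, show j - 1 + 2 = j + 1 by grind,
      show j - 1 + 4 = j + 3 by grind, show j - 1 = j + 4 by grind]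
    linarith

lemma exists_of_pair_le_one_of_sum_le_two (hR : ∀ j, 0 ≤ R j) (hpair : ∀ j, R j + R (j + 2) ≤ 1)
    (hsum : ∑ j, R j ≤ 2) : ∃ w, IsCycleEdgeCover R w := by
  by_cases hdom : ∀ j, R (j + 2) + R (j + 4) ≤ R j + R (j + 1) + R (j + 3)
  · exact exists_of_sum_le_two hsum hdom
  · push Not at hdom
    obtain ⟨i, hi⟩ := hdom
    obtain ⟨w, hw⟩ := exists_of_dominated (R := fun j ↦ R (j + i)) (fun j ↦ hR _)
      (fun j ↦ by simpa [add_right_comm] using hpair (j + i))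
      (by simpa [add_comm] using hi.le)
    exact ⟨_, hw.of_rotate i⟩

end IsCycleEdgeCover

end EdgeCover

lemma isSideInfoClique_fiveCycle (j : Fin 5) : IsSideInfoClique fiveCycle {j, j + 1} := by
  revert j
  unfold IsSideInfoClique
  decide

lemma sum_filter_mem_fiveCycle_edge (w : Fin 5 → ℝ) (j : Fin 5) :
    ∑ c with j ∈ ({c, c + 1} : Finset (Fin 5)), w c = w j + w (j - 1) := by
  have hedges : ∀ j : Fin 5, ({c | j ∈ ({c, c + 1} : Finset (Fin 5))} : Finset (Fin 5)) =
      {j, j - 1} ∧ j ≠ j - 1 := by decide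
  rw [(hedges j).1, sum_pair (hedges j).2]

/-- **Capacity region of the symmetric 5-message cyclic index coding problem**
`(1|5,2), (2|1,3), (3|2,4), (4|3,5), (5|4,1)` (Example 1, with messages indexed by `Fin 5`
and side information `A j = {j-1, j+1}` mod 5): the capacity region (closure of the set of
achievable rate tuples) equals the set of nonnegative tuples with `R j + R (j+2) ≤ 1` for
all `j` (the five cycle inequalities) and `R 0 + R 1 + R 2 + R 3 + R 4 ≤ 2`. -/
theorem capacity_region_five_cycle :
    closure {R : Fin 5 → ℝ |
        IndexAchievable 5 (fun j => ({j - 1, j + 1} : Finset (Fin 5))) R} =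
      {R : Fin 5 → ℝ | (∀ j, 0 ≤ R j) ∧
        (∀ j : Fin 5, R j + R (j + 2) ≤ 1) ∧
        R 0 + R 1 + R 2 + R 3 + R 4 ≤ 2} := by
  refine Set.Subset.antisymm (closure_minimal (fun R hR ↦ ⟨hR.1, fun j ↦ ?_, ?_⟩) ?_) ?_
  · simpa [sum_pair] using hR.sum_le_one_of_acyclic (wellFoundedOn_fiveCycle j)
  · simpa [Fin.sum_univ_five] using hR.sum_le_two_of_fiveCycle
  · simp only [Set.ofPred_and, Set.ofPred_forall]
    refine (isClosed_iInter fun j ↦ isClosed_le ?_ ?_).inter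
      ((isClosed_iInter fun j ↦ isClosed_le ?_ ?_).inter (isClosed_le ?_ ?_)) <;> fun_prop
  · rintro R ⟨hR, hpair, hsum⟩
    obtain ⟨w, hw⟩ := IsCycleEdgeCover.exists_of_pair_le_one_of_sum_le_two hR hpair
      (by simpa [Fin.sum_univ_five] using hsum)
    refine IndexAchievable.mem_closure_of_cliques isSideInfoClique_fiveCycle hR hw.nonneg
      hw.sum_le_one fun j ↦ ?_
    exact (hw.le_add j).trans_eq (sum_filter_mem_fiveCycle_edge w j).symm
end

section
/- Capacity region of the 3-message index coding problem (1|2), (2|1,3), (3|1). Consider the index coding problem with 3 messages and side information sets A_1 = {2}, A_2 = {1,3}, A_3 = {1}. Its capacity region is exactly the set of tuples (R_1,R_2,R_3) of nonnegative reals satisfying R_1 + R_3 ≤ 1 and R_2 + R_3 ≤ 1. -/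
/-!
Converse: on an acyclic set `S` of messages, the transmitted string together with the messages
outside `S` determines every correctly decoded tuple, because the decoders can be run one after the
other along a topological order of `S`. Counting correctly decoded tuples then gives
`∑ j ∈ S, R j ≤ 1`. The relevant sets are `{1, 3}` and `{2, 3}`.

Achievability: messages whose receivers know each other's messages can share a single symbol, namely
their sum modulo a common alphabet size. Grouping the messages as `{1, 2}`, `{3}` needs rate
`max R₁ R₂ + R₃`.
-/

open Finset Filter

/-- The tuples `(m_1, …, m_N)` of messages at rates `R` and block length `n`. -/
abbrev MessageTuple {N : ℕ} (n : ℕ) (R : Fin N → ℝ) : Type :=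
  ∀ j : Fin N, Fin (msgCard n (R j))

/-- The capacity region `𝒞` of the index coding problem with side information sets `A j`: the
closure of the set of achievable rate tuples. -/
def capacityRegion {N : ℕ} (A : Fin N → Finset (Fin N)) : Set (Fin N → ℝ) :=
  closure {R | IndexAchievable N A R}

/-- The side information graph, with an edge from `j` to each element of `A j`, has no directed
cycle inside `S`. Acyclicity is encoded by the existence of a topological ranking of `S`. -/
def IsAcyclicOn {N : ℕ} (A : Fin N → Finset (Fin N)) (S : Finset (Fin N)) : Prop :=
  ∃ rank : Fin N → ℕ, ∀ j ∈ S, ∀ k ∈ A j, k ∈ S → rank k < rank j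

/-- A partition of the messages into cliques of the side information graph, encoded by the map `c`
sending a message to the label of its part: each receiver knows all other messages of its part. -/
def IsCliqueCover {N : ℕ} {ι : Type*} (A : Fin N → Finset (Fin N)) (c : Fin N → ι) : Prop :=
  ∀ j k, c j = c k → k ≠ j → k ∈ A j

section MsgCard

variable {ι : Type*} (s : Finset ι) (n : ℕ)

lemma msgCard_pos (R : ℝ) : 0 < msgCard n R :=
  Nat.ceil_pos.mpr (by positivity)

instance msgCard_neZero (R : ℝ) : NeZero (msgCard n R) :=
  ⟨(msgCard_pos n R).ne'⟩

lemma msgCard_mono : Monotone (msgCard n) := fun _ _ h =>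
  Nat.ceil_mono (Real.rpow_le_rpow_of_exponent_le one_le_two (by gcongr))

lemma msgCard_le {R : ℝ} (hR : 0 ≤ R) : (msgCard n R : ℝ) ≤ 2 * (2 : ℝ) ^ (n * R) := by
  have h_one_le : (1 : ℝ) ≤ (2 : ℝ) ^ (n * R) := Real.one_le_rpow one_le_two (by positivity)
  have h_ceil : (msgCard n R : ℝ) < (2 : ℝ) ^ (n * R) + 1 := Nat.ceil_lt_add_one (by positivity)
  linarith

lemma two_rpow_mul_sum (R : ι → ℝ) :
    (2 : ℝ) ^ (n * ∑ i ∈ s, R i) = ∏ i ∈ s, (2 : ℝ) ^ (n * R i) := by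
  rw [mul_sum, Real.rpow_sum_of_pos two_pos]

lemma two_rpow_mul_sum_le_prod_msgCard (R : ι → ℝ) :
    (2 : ℝ) ^ (n * ∑ i ∈ s, R i) ≤ ∏ i ∈ s, (msgCard n (R i) : ℝ) := by
  rw [two_rpow_mul_sum]
  exact prod_le_prod (fun _ _ => by positivity) fun _ _ => Nat.le_ceil _

lemma prod_msgCard_le {R : ι → ℝ} (hR : ∀ i ∈ s, 0 ≤ R i) :
    ∏ i ∈ s, (msgCard n (R i) : ℝ) ≤ 2 ^ #s * (2 : ℝ) ^ (n * ∑ i ∈ s, R i) := by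
  rw [two_rpow_mul_sum, ← prod_const, ← prod_mul_distrib]
  exact prod_le_prod (fun _ _ => by positivity) fun i hi => msgCard_le n (hR i hi)

lemma two_pow_div_two_rpow (r : ℝ) : (2 : ℝ) ^ n / (2 : ℝ) ^ (n * r) = ((2 : ℝ) ^ (1 - r)) ^ n := by
  rw [← Real.rpow_mul_natCast two_pos.le, ← Real.rpow_natCast, ← Real.rpow_sub two_pos]
  ring_nf

lemma eventually_prod_msgCard_le_two_pow {R : ι → ℝ} (hR : ∀ i ∈ s, 0 ≤ R i)
    (hsum : ∑ i ∈ s, R i < 1) : ∀ᶠ n in atTop, ∏ i ∈ s, msgCard n (R i) ≤ 2 ^ n := by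
  have h_base : 1 < (2 : ℝ) ^ (1 - ∑ i ∈ s, R i) := Real.one_lt_rpow one_lt_two (by linarith)
  filter_upwards [(tendsto_pow_atTop_atTop_of_one_lt h_base).eventually_ge_atTop (2 ^ #s)] with n hn
  rw [← two_pow_div_two_rpow, le_div_iff₀ (by positivity)] at hn
  exact_mod_cast (prod_msgCard_le s n hR).trans hn

end MsgCard

variable {N : ℕ} {A : Fin N → Finset (Fin N)} {R : Fin N → ℝ} {n : ℕ}

namespace IndexCode

instance : Nonempty (IndexCode N A R n) :=
  ⟨⟨fun _ _ => false, fun _ _ _ => 0⟩⟩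

/-- The message tuple `m` is recovered by every receiver. -/
def Decodes (C : IndexCode N A R n) (m : MessageTuple n R) : Prop :=
  ∀ j, C.dec j (C.enc m) (fun k => m k) = m j

lemma one_sub_Pe (C : IndexCode N A R n) :
    1 - C.Pe = Nat.card {m // C.Decodes m} / ∏ j, (msgCard n (R j) : ℝ) := by
  classical
  have h_card : (Nat.card (MessageTuple n R) : ℝ) = ∏ j, (msgCard n (R j) : ℝ) := by
    simp
  have h_split : (Nat.card {m // C.Decodes m} : ℝ) + Nat.card {m // ¬ C.Decodes m} =
      Nat.card (MessageTuple n R) := by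
    rw [← Nat.cast_add, ← Nat.card_sum, Nat.card_congr (Equiv.sumCompl C.Decodes)]
  have h_ne : (Nat.card (MessageTuple n R) : ℝ) ≠ 0 := Nat.cast_ne_zero.mpr Nat.card_pos.ne'
  have h_Pe : C.Pe = Nat.card {m // ¬ C.Decodes m} / Nat.card (MessageTuple n R) := by
    simp only [Pe, Decodes, not_forall, ne_eq]
  rw [h_Pe, ← h_card, one_sub_div h_ne, ← h_split, add_sub_cancel_right]

lemma eq_of_isAcyclicOn (C : IndexCode N A R n) {S : Finset (Fin N)} (hS : IsAcyclicOn A S)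
    {m m' : MessageTuple n R} (hm : C.Decodes m) (hm' : C.Decodes m')
    (h_enc : C.enc m = C.enc m') (h_compl : ∀ j ∉ S, m j = m' j) : m = m' := by
  obtain ⟨rank, hrank⟩ := hS
  funext j
  induction j using (measure rank).wf.induction with
  | _ j ih =>
    by_cases hj : j ∈ S
    · have h_side : (fun k : {k // k ∈ A j} => m k) = fun k : {k // k ∈ A j} => m' k := by
        funext ⟨k, hk⟩
        by_cases hkS : k ∈ S
        · exact ih k (hrank j hj k hk hkS)
        · exact h_compl k hkS
      rw [← hm j, ← hm' j, h_enc, h_side]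
    · exact h_compl j hj

lemma card_decodes_le (C : IndexCode N A R n) {S : Finset (Fin N)} (hS : IsAcyclicOn A S) :
    Nat.card {m // C.Decodes m} ≤ 2 ^ n * ∏ j ∈ Sᶜ, msgCard n (R j) := by
  let observe (m : {m // C.Decodes m}) :
      (Fin n → Bool) × ∀ j : {j // j ∈ Sᶜ}, Fin (msgCard n (R j)) :=
    (C.enc m.1, fun j => m.1 j)
  have h_inj : Function.Injective observe := fun m m' h =>
    Subtype.ext <| C.eq_of_isAcyclicOn hS m.2 m'.2 (congrArg Prod.fst h) fun j hj =>
      congrFun (congrArg Prod.snd h) ⟨j, mem_compl.mpr hj⟩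
  calc Nat.card {m // C.Decodes m}
      ≤ Nat.card ((Fin n → Bool) × ∀ j : {j // j ∈ Sᶜ}, Fin (msgCard n (R j))) :=
        Nat.card_le_card_of_injective observe h_inj
    _ = 2 ^ n * ∏ j ∈ Sᶜ, msgCard n (R j) := by
        simp [← prod_coe_sort Sᶜ fun j => msgCard n (R j)]

lemma one_sub_Pe_le (C : IndexCode N A R n) {S : Finset (Fin N)} (hS : IsAcyclicOn A S) :
    1 - C.Pe ≤ ((2 : ℝ) ^ (1 - ∑ j ∈ S, R j)) ^ n := by
  have h_pos (T : Finset (Fin N)) : 0 < ∏ j ∈ T, (msgCard n (R j) : ℝ) :=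
    prod_pos fun j _ => Nat.cast_pos.mpr (msgCard_pos n (R j))
  have h_count : (Nat.card {m // C.Decodes m} : ℝ) ≤ 2 ^ n * ∏ j ∈ Sᶜ, (msgCard n (R j) : ℝ) := by
    exact_mod_cast C.card_decodes_le hS
  calc 1 - C.Pe = Nat.card {m // C.Decodes m} / ∏ j, (msgCard n (R j) : ℝ) := C.one_sub_Pe
    _ ≤ 2 ^ n * (∏ j ∈ Sᶜ, (msgCard n (R j) : ℝ)) / ∏ j, (msgCard n (R j) : ℝ) := by gcongr
    _ = 2 ^ n / ∏ j ∈ S, (msgCard n (R j) : ℝ) := by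
        rw [← prod_mul_prod_compl S, mul_div_mul_right _ _ (h_pos Sᶜ).ne']
    _ ≤ 2 ^ n / (2 : ℝ) ^ (n * ∑ j ∈ S, R j) := by
        gcongr
        exact two_rpow_mul_sum_le_prod_msgCard S n R
    _ = ((2 : ℝ) ^ (1 - ∑ j ∈ S, R j)) ^ n := two_pow_div_two_rpow n _

end IndexCode

lemma IndexAchievable.sum_le_one (hR : IndexAchievable N A R) {S : Finset (Fin N)}
    (hS : IsAcyclicOn A S) : ∑ j ∈ S, R j ≤ 1 := by
  obtain ⟨-, C, hC⟩ := hR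
  by_contra! h_gt
  have h_base : (2 : ℝ) ^ (1 - ∑ j ∈ S, R j) < 1 :=
    Real.rpow_lt_one_of_one_lt_of_neg one_lt_two (by linarith)
  have h_one_le_zero : 1 - (0 : ℝ) ≤ 0 :=
    le_of_tendsto_of_tendsto' (hC.const_sub 1)
      (tendsto_pow_atTop_nhds_zero_of_lt_one (by positivity) h_base) fun n => (C n).one_sub_Pe_le hS
  linarith

lemma sum_le_one_of_mem_capacityRegion (hR : R ∈ capacityRegion A) {S : Finset (Fin N)}
    (hS : IsAcyclicOn A S) : ∑ j ∈ S, R j ≤ 1 :=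
  closure_minimal (t := {R : Fin N → ℝ | ∑ j ∈ S, R j ≤ 1}) (fun _ h => h.sum_le_one hS)
    (isClosed_le (by fun_prop) continuous_const) hR

lemma nonneg_of_mem_capacityRegion (hR : R ∈ capacityRegion A) : 0 ≤ R :=
  closure_minimal (t := Set.Ici 0) (fun _ h => h.1) isClosed_Ici hR

namespace IndexCode

/-- The code with encoder `enc` whose receiver `j` outputs the `j`-th entry of some message tuple
consistent with its observation, and message `0` if there is none. -/
noncomputable def ofEncoder (enc : MessageTuple n R → Fin n → Bool) : IndexCode N A R n where
  enc := enc
  dec j x s := Function.extend (fun m => (enc m, fun k : {k // k ∈ A j} => m k)) (fun m => m j)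
    (fun _ => 0) (x, s)

lemma ofEncoder_Pe_eq_zero {enc : MessageTuple n R → Fin n → Bool}
    (h_sep : ∀ j m m', enc m = enc m' → (∀ k ∈ A j, m k = m' k) → m j = m' j) :
    (ofEncoder enc : IndexCode N A R n).Pe = 0 := by
  have h_factors (j : Fin N) : Function.FactorsThrough (fun m : MessageTuple n R => m j)
      (fun m => (enc m, fun k : {k // k ∈ A j} => m k)) := fun m m' h =>
    h_sep j m m' (congrArg Prod.fst h) fun k hk => congrFun (congrArg Prod.snd h) ⟨k, hk⟩
  have h_decodes (m : MessageTuple n R) (j : Fin N) :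
      (ofEncoder enc : IndexCode N A R n).dec j (enc m) (fun k => m k) = m j :=
    (h_factors j).extend_apply (fun _ => 0) m
  have h_enc : (ofEncoder enc : IndexCode N A R n).enc = enc := rfl
  simp [Pe, h_enc, h_decodes]

end IndexCode

lemma IndexAchievable.of_eventually_exists_Pe_eq_zero (hR : 0 ≤ R)
    (h : ∀ᶠ n in atTop, ∃ C : IndexCode N A R n, C.Pe = 0) : IndexAchievable N A R :=
  ⟨hR, fun n => Classical.epsilon fun C : IndexCode N A R n => C.Pe = 0,
    tendsto_const_nhds.congr' <| h.mono fun _ hn => (Classical.epsilon_spec hn).symm⟩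

variable {ι : Type*} {c : Fin N → ι}

/-- The sums of the messages of each part of `c`, the part `i` being summed modulo `K i`. -/
def partSums [DecidableEq ι] (c : Fin N → ι) (K : ι → ℕ) (m : MessageTuple n R) (i : ι) :
    ZMod (K i) :=
  ∑ j with c j = i, ((m j : ℕ) : ZMod (K i))

lemma IsCliqueCover.eq_of_partSums_eq [DecidableEq ι] (hc : IsCliqueCover A c) {K : ι → ℕ}
    (hK : ∀ j, msgCard n (R j) ≤ K (c j)) {m m' : MessageTuple n R} {j : Fin N}
    (h_sums : partSums c K m = partSums c K m') (h_side : ∀ k ∈ A j, m k = m' k) :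
    m j = m' j := by
  have hj : j ∈ ({k | c k = c j} : Finset (Fin N)) := by simp
  have h_others : ∑ k ∈ ({k | c k = c j} : Finset (Fin N)).erase j, ((m k : ℕ) : ZMod (K (c j))) =
      ∑ k ∈ ({k | c k = c j} : Finset (Fin N)).erase j, ((m' k : ℕ) : ZMod (K (c j))) :=
    sum_congr rfl fun k hk => by
      rw [mem_erase, mem_filter_univ] at hk
      rw [h_side k (hc j k hk.2.symm hk.1)]
  have h_cast : ((m j : ℕ) : ZMod (K (c j))) = ((m' j : ℕ) : ZMod (K (c j))) := by
    have h_sum := congrFun h_sums (c j)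
    rwa [partSums, partSums, ← add_sum_erase _ _ hj, ← add_sum_erase _ _ hj, h_others,
      add_left_inj] at h_sum
  exact Fin.ext <| CharP.natCast_injOn_Iio (ZMod (K (c j))) (K (c j))
    ((m j).isLt.trans_le (hK j)) ((m' j).isLt.trans_le (hK j)) h_cast

variable [Fintype ι]

lemma IsCliqueCover.exists_Pe_eq_zero (hc : IsCliqueCover A c) {K : ι → ℕ} [∀ i, NeZero (K i)]
    (hK : ∀ j, msgCard n (R j) ≤ K (c j)) (h_prod : ∏ i, K i ≤ 2 ^ n) :
    ∃ C : IndexCode N A R n, C.Pe = 0 := by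
  classical
  obtain ⟨e⟩ : Nonempty ((∀ i, ZMod (K i)) ↪ (Fin n → Bool)) :=
    Function.Embedding.nonempty_of_card_le (by simpa [ZMod.card] using h_prod)
  exact ⟨.ofEncoder fun m => e (partSums c K m), IndexCode.ofEncoder_Pe_eq_zero
    fun _ _ _ h_enc h_side => hc.eq_of_partSums_eq hK (e.injective h_enc) h_side⟩

lemma IsCliqueCover.indexAchievable (hc : IsCliqueCover A c) (hR : 0 ≤ R) {ρ : ι → ℝ} (hρ : 0 ≤ ρ)
    (hRρ : ∀ j, R j ≤ ρ (c j)) (h_sum : ∑ i, ρ i < 1) : IndexAchievable N A R :=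
  .of_eventually_exists_Pe_eq_zero hR <|
    (eventually_prod_msgCard_le_two_pow univ (fun i _ => hρ i) h_sum).mono fun n h_prod =>
      hc.exists_Pe_eq_zero (fun j => msgCard_mono n (hRρ j)) h_prod

lemma IsCliqueCover.mem_capacityRegion (hc : IsCliqueCover A c) (hR : 0 ≤ R) {ρ : ι → ℝ}
    (hρ : 0 ≤ ρ) (hRρ : ∀ j, R j ≤ ρ (c j)) (h_sum : ∑ i, ρ i ≤ 1) : R ∈ capacityRegion A := by
  have h_lim : Tendsto (fun t : ℝ => t • R) (nhdsWithin 1 (Set.Iio 1)) (nhds R) :=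
    (Continuous.tendsto' (by fun_prop) 1 R (one_smul ℝ R)).mono_left nhdsWithin_le_nhds
  refine mem_closure_of_tendsto h_lim ?_
  filter_upwards [Ioo_mem_nhdsLT (zero_lt_one (α := ℝ))] with t ⟨ht0, ht1⟩
  refine hc.indexAchievable (ρ := t • ρ) (smul_nonneg ht0.le hR) (smul_nonneg ht0.le hρ)
    (fun j => mul_le_mul_of_nonneg_left (hRρ j) ht0.le) ?_
  calc ∑ i, (t • ρ) i = t * ∑ i, ρ i := (mul_sum ..).symm
    _ ≤ t * 1 := by gcongr
    _ < 1 := by linarith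

/-- **Capacity region of the 3-message index coding problem** `(1|2), (2|1,3), (3|1)`
(with messages 1,2,3 indexed by `0,1,2 : Fin 3`): the capacity region equals the set of
nonnegative rate tuples satisfying `R₁+R₃ ≤ 1` and `R₂+R₃ ≤ 1`. -/
theorem capacity_region_three_message_example :
    closure {R : Fin 3 → ℝ |
        IndexAchievable 3 (![({1} : Finset (Fin 3)), {0, 2}, {0}]) R} =
      {R : Fin 3 → ℝ | (∀ j, 0 ≤ R j) ∧ R 0 + R 2 ≤ 1 ∧ R 1 + R 2 ≤ 1} := by
  change capacityRegion ![{1}, {0, 2}, {0}] = _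
  ext R
  constructor
  · intro hR
    have h_acyclic₀₂ : IsAcyclicOn ![{1}, {0, 2}, {0}] {0, 2} := ⟨![0, 0, 1], by decide⟩
    have h_acyclic₁₂ : IsAcyclicOn ![{1}, {0, 2}, {0}] {1, 2} := ⟨![0, 1, 0], by decide⟩
    exact ⟨nonneg_of_mem_capacityRegion hR,
      by simpa using sum_le_one_of_mem_capacityRegion hR h_acyclic₀₂,
      by simpa using sum_le_one_of_mem_capacityRegion hR h_acyclic₁₂⟩
  · rintro ⟨h_nonneg, h₀₂, h₁₂⟩
    have h_cover : IsCliqueCover ![{1}, {0, 2}, {0}] (![0, 0, 1] : Fin 3 → Fin 2) := by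
      unfold IsCliqueCover; decide
    refine h_cover.mem_capacityRegion (ρ := ![max (R 0) (R 1), R 2]) h_nonneg ?_ ?_ ?_
    · simp [Pi.le_def, Fin.forall_fin_two, h_nonneg]
    · simp [Fin.forall_fin_succ]
    · simp [Fin.sum_univ_two, max_add, h₀₂, h₁₂]
end

section
/- Capacity region of the symmetric 6-message index coding problem with U = 1, D = 2. Consider the index coding problem with 6 messages and side information sets A_j = {j−1, j+1, j+2} (indices modulo 6), i.e., (1|2,3,6), (2|1,3,4), (3|2,4,5), (4|3,5,6), (5|4,6,1), (6|5,1,2). Its capacity region is exactly the set of tuples (R_1,...,R_6) of nonnegative reals satisfying, for every j ∈ {1,...,6} (indices modulo 6): R_j + R_{j+2} ≤ 1, R_j + R_{j+3} ≤ 1, and R_j + R_{j+1} + R_{j+2} + R_{j+3} + R_{j+4} ≤ 2. -/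
/-!
Converse. From the codeword and the messages in `S`, correct decoders can be chained; if this
recovers all messages, the codeword determines the messages outside `S` given those in `S`, so the
latter have total rate at most `1`. This gives the bounds on two rates. For the bound on five rates,
suppose that the decoders recover all messages from `S ∪ T` and from `U ∪ V`, and recover `U` from
`S` as well as from `T`. Submodularity of entropy gives `2 H(all) ≤ H(S) + H(T) + H(V)`, where the
codeword is included in the first two terms on the right; no entropy is needed, since counting
correctly decoded tuples gives the same inequality through Cauchy–Schwarz over the fibers of the
map to the codeword and `U`.

Achievability. Split each message into a left, a middle and a right part, and replace the right part
of message `i` and the left part of message `i + 1` by their sum. A receiver that knows two cyclic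
neighbours of the message it wants can read that message off these composites, so it suffices to
send all composites to all receivers. Joining composite tuples that some receiver cannot distinguish
gives a graph whose proper colorings are the zero-error codes for this task, and greedy coloring
needs at most `2 ^ n` colors, for large `n`, once the composites unknown to each receiver have total
rate below `1`.
-/

open Finset Filter

section Counting

variable {Ω α β γ δ : Type*} [DecidableEq α] [DecidableEq β] [DecidableEq δ]

lemma card_le_card_image_mul_card_image {s : Finset Ω} {f : Ω → α} {g : Ω → β}
    (hfg : Set.InjOn (fun w => (f w, g w)) s) : #s ≤ #(s.image f) * #(s.image g) := by
  rw [← card_product]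
  refine card_le_card_of_injOn (fun w => (f w, g w)) (fun w hw => ?_) hfg
  exact mem_product.2 ⟨mem_image_of_mem f hw, mem_image_of_mem g hw⟩

lemma sum_card_image_fiber [DecidableEq γ] {s : Finset Ω} {f : Ω → α} {h : Ω → γ}
    (hfh : ∀ v ∈ s, ∀ w ∈ s, f v = f w → h v = h w) :
    ∑ c ∈ s.image h, #({w ∈ s | h w = c}.image f) = #(s.image f) := by
  have hdisj : (s.image h : Set γ).PairwiseDisjoint fun c => {w ∈ s | h w = c}.image f := by
    intro c _ d _ hcd
    refine disjoint_left.2 fun y hyc hyd => hcd ?_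
    obtain ⟨v, hv, rfl⟩ := mem_image.1 hyc
    obtain ⟨w, hw, hwv⟩ := mem_image.1 hyd
    rw [mem_filter] at hv hw
    rw [← hv.2, ← hw.2, hfh w hw.1 v hv.1 hwv]
  classical
  rw [← card_biUnion hdisj, ← biUnion_image,
    biUnion_filter_eq_of_maps_to fun w hw => mem_image_of_mem h hw]

/-- Counting form of the entropy inequality `2 H(Ω) ≤ H(f) + H(g) + H(p)`, where submodularity is
replaced by the Cauchy–Schwarz inequality over the fibers of `h`. -/
theorem card_sq_le_card_image_mul_card_image_mul_card_image {s : Finset Ω} {f : Ω → α}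
    {g : Ω → β} {h : Ω → γ} {p : Ω → δ} (hfh : ∀ v ∈ s, ∀ w ∈ s, f v = f w → h v = h w)
    (hgh : ∀ v ∈ s, ∀ w ∈ s, g v = g w → h v = h w)
    (hfg : Set.InjOn (fun w => (f w, g w)) s) (hhp : Set.InjOn (fun w => (h w, p w)) s) :
    #s ^ 2 ≤ #(s.image f) * #(s.image g) * #(s.image p) := by
  classical
  let fiber (c : γ) : Finset Ω := {w ∈ s | h w = c}
  have hfiber_le_p (c : γ) : #(fiber c) ≤ #(s.image p) := by
    refine card_le_card_of_injOn p (fun w hw => mem_image_of_mem p (mem_filter.1 hw).1) ?_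
    intro v hv w hw hvw
    obtain ⟨hvs, hvc⟩ := mem_filter.1 hv
    obtain ⟨hws, hwc⟩ := mem_filter.1 hw
    exact hhp hvs hws (Prod.ext (hvc.trans hwc.symm) hvw)
  have hfiber_sq_le (c : γ) :
      #(fiber c) ^ 2 ≤ #((fiber c).image f) * (#((fiber c).image g) * #(s.image p)) := by
    rw [sq, ← mul_assoc]
    exact Nat.mul_le_mul
      (card_le_card_image_mul_card_image (hfg.mono fun w hw => (mem_filter.1 hw).1))
      (hfiber_le_p c)
  calc #s ^ 2 = (∑ c ∈ s.image h, #(fiber c)) ^ 2 := by rw [card_eq_sum_card_image h s]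
    _ ≤ (∑ c ∈ s.image h, #((fiber c).image f)) *
          ∑ c ∈ s.image h, #((fiber c).image g) * #(s.image p) :=
        sum_sq_le_sum_mul_sum_of_sq_le_mul _ (fun _ _ => Nat.zero_le _) (fun _ _ => Nat.zero_le _)
          fun c _ => hfiber_sq_le c
    _ = #(s.image f) * #(s.image g) * #(s.image p) := by
        rw [← sum_mul, sum_card_image_fiber hfh, sum_card_image_fiber hgh, mul_assoc]

end Counting

section MessageCount

variable {n : ℕ} {x y : ℝ}

instance instNeZeroMsgCard : NeZero (msgCard n x) :=
  ⟨(Nat.ceil_pos.2 (by positivity)).ne'⟩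

lemma msgCard_add_le : msgCard n (x + y) ≤ msgCard n x * msgCard n y := by
  refine Nat.ceil_le.2 ?_
  rw [mul_add, Real.rpow_add two_pos, Nat.cast_mul]
  exact mul_le_mul (Nat.le_ceil _) (Nat.le_ceil _) (by positivity) (Nat.cast_nonneg _)

lemma msgCard_le_two_rpow (hx : 0 ≤ x) : (msgCard n x : ℝ) ≤ 2 ^ (n * x + 1) := by
  have hone : (1 : ℝ) ≤ 2 ^ (n * x) := Real.one_le_rpow one_le_two (by positivity)
  rw [Real.rpow_add two_pos, Real.rpow_one]
  linarith [show (msgCard n x : ℝ) < 2 ^ (n * x) + 1 from Nat.ceil_lt_add_one (by positivity)]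

lemma mul_le_logb_msgCard : n * x ≤ Real.logb 2 (msgCard n x) := by
  rw [Real.le_logb_iff_rpow_le one_lt_two (Nat.cast_pos.2 (NeZero.pos _))]
  exact Nat.le_ceil _

lemma logb_msgCard_le (hx : 0 ≤ x) : Real.logb 2 (msgCard n x) ≤ n * x + 1 := by
  rw [Real.logb_le_iff_le_rpow one_lt_two (Nat.cast_pos.2 (NeZero.pos _))]
  exact msgCard_le_two_rpow hx

lemma tendsto_logb_msgCard_div (hx : 0 ≤ x) :
    Tendsto (fun n : ℕ => Real.logb 2 (msgCard n x) / n) atTop (nhds x) := by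
  have hupper : Tendsto (fun n : ℕ => x + 1 / (n : ℝ)) atTop (nhds x) := by
    simpa using tendsto_one_div_atTop_nhds_zero_nat.const_add x
  refine tendsto_of_tendsto_of_tendsto_of_le_of_le' tendsto_const_nhds hupper ?_ ?_ <;>
    filter_upwards [eventually_gt_atTop 0] with n hn
  · rw [le_div_iff₀' (by positivity)]
    exact mul_le_logb_msgCard
  · rw [div_le_iff₀' (by positivity), mul_add, mul_one_div_cancel (by positivity)]
    exact logb_msgCard_le hx

variable {ι : Type*} {s : Finset ι} {r : ι → ℝ}

lemma tendsto_logb_prod_msgCard_div (hr : ∀ k ∈ s, 0 ≤ r k) :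
    Tendsto (fun n : ℕ => Real.logb 2 (∏ k ∈ s, (msgCard n (r k) : ℝ)) / n) atTop
      (nhds (∑ k ∈ s, r k)) := by
  have hlogb (n : ℕ) : Real.logb 2 (∏ k ∈ s, (msgCard n (r k) : ℝ)) / n =
      ∑ k ∈ s, Real.logb 2 (msgCard n (r k)) / n := by
    rw [Real.logb_prod _ _ fun k _ => Nat.cast_ne_zero.2 (NeZero.ne _), sum_div]
  simp only [hlogb]
  exact tendsto_finsetSum s fun k hk => tendsto_logb_msgCard_div (hr k hk)

lemma tendsto_prod_msgCard_div_two_pow (hr : ∀ k ∈ s, 0 ≤ r k) (hsum : ∑ k ∈ s, r k < 1) :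
    Tendsto (fun n : ℕ => (∏ k ∈ s, (msgCard n (r k) : ℝ)) / 2 ^ n) atTop (nhds 0) := by
  set σ := ∑ k ∈ s, r k
  have hbound (n : ℕ) : (∏ k ∈ s, (msgCard n (r k) : ℝ)) / 2 ^ n ≤ 2 ^ #s * (2 ^ (σ - 1)) ^ n :=
    calc (∏ k ∈ s, (msgCard n (r k) : ℝ)) / 2 ^ n ≤ (∏ k ∈ s, (2 : ℝ) ^ (n * r k + 1)) / 2 ^ n := by
          gcongr with k hk
          exact msgCard_le_two_rpow (hr k hk)
      _ = 2 ^ (n * σ + #s) / 2 ^ n := by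
          rw [← Real.rpow_sum_of_pos two_pos, sum_add_distrib, ← mul_sum, sum_const, nsmul_one]
      _ = 2 ^ #s * (2 ^ (σ - 1)) ^ n := by
          rw [← Real.rpow_natCast 2 n, ← Real.rpow_sub two_pos, ← Real.rpow_natCast 2 #s,
            ← Real.rpow_mul_natCast two_pos.le, ← Real.rpow_add two_pos]
          ring_nf
  have hratio : (2 : ℝ) ^ (σ - 1) < 1 := Real.rpow_lt_one_of_one_lt_of_neg one_lt_two (by linarith)
  refine squeeze_zero (fun n => by positivity) hbound ?_
  simpa using (tendsto_pow_atTop_nhds_zero_of_lt_one (by positivity) hratio).const_mul (2 ^ #s)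

lemma eventually_sum_prod_msgCard_lt_two_pow {J : Type*} [Fintype J] {t : J → Finset ι}
    (hr : ∀ k, 0 ≤ r k) (hsum : ∀ j, ∑ k ∈ t j, r k < 1) :
    ∀ᶠ n : ℕ in atTop, ∑ j, ∏ k ∈ t j, msgCard n (r k) < 2 ^ n := by
  have hlim : Tendsto (fun n : ℕ => ∑ j, (∏ k ∈ t j, (msgCard n (r k) : ℝ)) / 2 ^ n) atTop
      (nhds 0) := by
    simpa using tendsto_finsetSum univ fun j _ =>
      tendsto_prod_msgCard_div_two_pow (fun k _ => hr k) (hsum j)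
  filter_upwards [hlim.eventually_lt_const one_pos] with n hn
  rw [← sum_div, div_lt_one (by positivity)] at hn
  exact_mod_cast hn

end MessageCount

section Decoding

variable {N n : ℕ} {A : Fin N → Finset (Fin N)} {R : Fin N → ℝ}

/-- One round of decoding: from the codeword and the messages in `S`, a correct decoder recovers
every message whose side information lies in `S`. -/
def decodeStep (A : Fin N → Finset (Fin N)) (S : Finset (Fin N)) : Finset (Fin N) :=
  S ∪ univ.filter fun k => A k ⊆ S

/-- The messages recovered from the codeword and the messages in `S` by chaining decoders.
`N` rounds suffice, as each round that is not the last recovers a new message. -/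
def decodeClosure (A : Fin N → Finset (Fin N)) (S : Finset (Fin N)) : Finset (Fin N) :=
  (decodeStep A)^[N] S

namespace IndexCode

variable (C : IndexCode N A R n)

/-- The message tuples that all decoders of `C` recover. -/
noncomputable def correctTuples : Finset (∀ j, Fin (msgCard n (R j))) :=
  univ.filter fun m => ∀ j, C.dec j (C.enc m) (fun k => m k.1) = m j

/-- The codeword of `m` together with the messages in `S`. -/
def view (S : Finset (Fin N)) (m : ∀ j, Fin (msgCard n (R j))) :
    (Fin n → Bool) × (∀ k : S, Fin (msgCard n (R k))) :=
  (C.enc m, S.restrict m)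

variable {C} {S T U V : Finset (Fin N)} {m m' : ∀ j, Fin (msgCard n (R j))}

lemma mem_correctTuples :
    m ∈ C.correctTuples ↔ ∀ j, C.dec j (C.enc m) (fun k => m k.1) = m j := by
  simp only [correctTuples, mem_filter, mem_univ, true_and]

lemma view_eq_view_iff :
    C.view S m = C.view S m' ↔ C.enc m = C.enc m' ∧ ∀ k ∈ S, m k = m' k := by
  simp only [view, Prod.mk.injEq, funext_iff, restrict, Subtype.forall]

lemma view_eq_view_of_subset (hTS : T ⊆ S) (h : C.view S m = C.view S m') :
    C.view T m = C.view T m' := by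
  rw [view_eq_view_iff] at h ⊢
  exact ⟨h.1, fun k hk => h.2 k (hTS hk)⟩

lemma view_decodeStep_eq (hm : m ∈ C.correctTuples) (hm' : m' ∈ C.correctTuples)
    (h : C.view S m = C.view S m') : C.view (decodeStep A S) m = C.view (decodeStep A S) m' := by
  rw [view_eq_view_iff] at h ⊢
  refine ⟨h.1, fun k hk => ?_⟩
  rcases mem_union.1 hk with hk | hk
  · exact h.2 k hk
  · have hkS : A k ⊆ S := (mem_filter.1 hk).2
    have hside (i : {i // i ∈ A k}) : m i.1 = m' i.1 := h.2 i.1 (hkS i.2)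
    have hdec := congrArg₂ (C.dec k) h.1 (funext hside)
    rwa [mem_correctTuples.1 hm k, mem_correctTuples.1 hm' k] at hdec

lemma view_decodeClosure_eq (hm : m ∈ C.correctTuples) (hm' : m' ∈ C.correctTuples)
    (h : C.view S m = C.view S m') :
    C.view (decodeClosure A S) m = C.view (decodeClosure A S) m' := by
  have hiterate (t : ℕ) :
      C.view ((decodeStep A)^[t] S) m = C.view ((decodeStep A)^[t] S) m' := by
    induction t with
    | zero => exact h
    | succ t ih =>
      rw [Function.iterate_succ_apply']
      exact view_decodeStep_eq hm hm' ih
  exact hiterate N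

lemma eq_of_view_eq (hS : decodeClosure A S = univ) (hm : m ∈ C.correctTuples)
    (hm' : m' ∈ C.correctTuples) (h : C.view S m = C.view S m') : m = m' := by
  have huniv := view_decodeClosure_eq hm hm' h
  rw [hS, view_eq_view_iff] at huniv
  exact funext fun k => huniv.2 k (mem_univ k)

variable (C) in
lemma card_image_view_le (s : Finset (∀ j, Fin (msgCard n (R j)))) :
    #(s.image (C.view S)) ≤ 2 ^ n * ∏ k ∈ S, msgCard n (R k) := by
  refine (card_le_univ _).trans_eq ?_
  simp only [Fintype.card_prod, Fintype.card_pi, Fintype.card_bool, Fintype.card_fin, prod_const,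
    card_univ, prod_coe_sort S fun k => msgCard n (R k)]

lemma card_image_restrict_le (s : Finset (∀ j, Fin (msgCard n (R j)))) :
    #(s.image V.restrict) ≤ ∏ k ∈ V, msgCard n (R k) := by
  refine (card_le_univ _).trans_eq ?_
  simp only [Fintype.card_pi, Fintype.card_fin, prod_coe_sort V fun k => msgCard n (R k)]

variable (C)

theorem card_correctTuples_le (hS : decodeClosure A S = univ) :
    #C.correctTuples ≤ 2 ^ n * ∏ k ∈ S, msgCard n (R k) := by
  have hinj : Set.InjOn (C.view S) C.correctTuples := fun m hm m' hm' h => eq_of_view_eq hS hm hm' h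
  rw [← card_image_of_injOn hinj]
  exact card_image_view_le C _

theorem card_correctTuples_sq_le (hST : decodeClosure A (S ∪ T) = univ)
    (hUS : U ⊆ decodeClosure A S) (hUT : U ⊆ decodeClosure A T)
    (hUV : decodeClosure A (U ∪ V) = univ) :
    #C.correctTuples ^ 2 ≤ (2 ^ n * ∏ k ∈ S, msgCard n (R k)) *
      (2 ^ n * ∏ k ∈ T, msgCard n (R k)) * ∏ k ∈ V, msgCard n (R k) := by
  refine (card_sq_le_card_image_mul_card_image_mul_card_image
    (f := C.view S) (g := C.view T) (h := C.view U) (p := V.restrict) ?_ ?_ ?_ ?_).trans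
    (Nat.mul_le_mul (Nat.mul_le_mul (C.card_image_view_le _) (C.card_image_view_le _))
      (card_image_restrict_le _))
  · exact fun m hm m' hm' h => view_eq_view_of_subset hUS (view_decodeClosure_eq hm hm' h)
  · exact fun m hm m' hm' h => view_eq_view_of_subset hUT (view_decodeClosure_eq hm hm' h)
  · intro m hm m' hm' h
    simp only [Prod.mk.injEq, view_eq_view_iff] at h
    exact eq_of_view_eq hST hm hm' (view_eq_view_iff.2
      ⟨h.1.1, fun k hk => (mem_union.1 hk).elim (h.1.2 k) (h.2.2 k)⟩)
  · intro m hm m' hm' h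
    simp only [Prod.mk.injEq, view_eq_view_iff] at h
    exact eq_of_view_eq hUV hm hm' (view_eq_view_iff.2
      ⟨h.1.1, fun k hk => (mem_union.1 hk).elim (h.1.2 k) fun hk => congrFun h.2 ⟨k, hk⟩⟩)

lemma prod_msgCard_le_two_mul_card_correctTuples (hC : C.Pe ≤ 1 / 2) :
    ∏ k, msgCard n (R k) ≤ 2 * #C.correctTuples := by
  have htotal : Nat.card (∀ j, Fin (msgCard n (R j))) = ∏ k, msgCard n (R k) := by
    simp only [Nat.card_pi, Nat.card_fin]
  have herror : Nat.card {m : ∀ j, Fin (msgCard n (R j)) //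
      ∃ j, C.dec j (C.enc m) (fun k => m k.1) ≠ m j} = #C.correctTuplesᶜ := by
    rw [Nat.card_eq_fintype_card, Fintype.card_subtype, correctTuples, compl_filter]
    simp only [ne_eq, not_forall]
  have hsum : #C.correctTuplesᶜ + #C.correctTuples = ∏ k, msgCard n (R k) := by
    rw [card_compl_add_card, ← htotal, Nat.card_eq_fintype_card]
  have hpos : (0 : ℝ) < ∏ k, (msgCard n (R k) : ℝ) :=
    prod_pos fun k _ => Nat.cast_pos.2 (NeZero.pos _)
  rw [IndexCode.Pe, htotal, herror, Nat.cast_prod, div_le_iff₀ hpos] at hC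
  have hsum' : (#C.correctTuplesᶜ : ℝ) + #C.correctTuples = ∏ k, (msgCard n (R k) : ℝ) := by
    exact_mod_cast hsum
  have hgoal : ∏ k, (msgCard n (R k) : ℝ) ≤ 2 * #C.correctTuples := by linarith
  exact_mod_cast hgoal

end IndexCode

end Decoding

section Converse

variable {N : ℕ} {A : Fin N → Finset (Fin N)} {R : Fin N → ℝ}

lemma le_of_eventually_logb_le {u v : ℕ → ℝ} {a b c d : ℝ}
    (hu : Tendsto (fun n : ℕ => u n / n) atTop (nhds a))
    (hv : Tendsto (fun n : ℕ => v n / n) atTop (nhds b))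
    (h : ∀ᶠ n : ℕ in atTop, u n ≤ c + n * d + v n) : a ≤ d + b := by
  have hc : Tendsto (fun n : ℕ => c / (n : ℝ)) atTop (nhds 0) :=
    tendsto_const_div_atTop_nhds_zero_nat c
  have hlim : Tendsto (fun n : ℕ => c / (n : ℝ) + (d + v n / n)) atTop (nhds (d + b)) := by
    simpa using hc.add (hv.const_add d)
  refine le_of_tendsto_of_tendsto hu hlim ?_
  filter_upwards [h, eventually_gt_atTop 0] with n hn hpos
  calc u n / n ≤ (c + n * d + v n) / n := by gcongr
    _ = c / n + (d + v n / n) := by field_simp; ring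

namespace IndexAchievable

lemma eventually_exists_prod_msgCard_le (h : IndexAchievable N A R) :
    ∀ᶠ n : ℕ in atTop, ∃ C : IndexCode N A R n,
      ∏ k, msgCard n (R k) ≤ 2 * #C.correctTuples := by
  obtain ⟨-, C, hC⟩ := h
  filter_upwards [hC.eventually_le_const (by norm_num : (0 : ℝ) < 1 / 2)] with n hn
  exact ⟨C n, (C n).prod_msgCard_le_two_mul_card_correctTuples hn⟩

/-- The maximal acyclic induced subgraph bound. -/
theorem sum_le_one_s11 {T : Finset (Fin N)} (h : IndexAchievable N A R)
    (hT : decodeClosure A Tᶜ = univ) : ∑ k ∈ T, R k ≤ 1 := by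
  have hlogb : ∀ᶠ n : ℕ in atTop,
      Real.logb 2 (∏ k ∈ T, (msgCard n (R k) : ℝ)) ≤ 1 + n * 1 + 0 := by
    filter_upwards [h.eventually_exists_prod_msgCard_le] with n ⟨C, hC⟩
    have hcard : ∏ k ∈ T, msgCard n (R k) ≤ 2 ^ (1 + n) := by
      refine Nat.le_of_mul_le_mul_right ?_ (prod_pos (s := Tᶜ) (f := fun k => msgCard n (R k))
        fun k _ => NeZero.pos _)
      calc (∏ k ∈ T, msgCard n (R k)) * ∏ k ∈ Tᶜ, msgCard n (R k)
          = ∏ k, msgCard n (R k) := prod_mul_prod_compl T _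
        _ ≤ 2 * (2 ^ n * ∏ k ∈ Tᶜ, msgCard n (R k)) := by
            grw [hC, C.card_correctTuples_le hT]
        _ = 2 ^ (1 + n) * ∏ k ∈ Tᶜ, msgCard n (R k) := by ring
    rw [Real.logb_le_iff_le_rpow one_lt_two (prod_pos fun k _ => Nat.cast_pos.2 (NeZero.pos _)),
      mul_one, add_zero]
    exact_mod_cast hcard
  simpa using le_of_eventually_logb_le (v := 0) (b := 0)
    (tendsto_logb_prod_msgCard_div fun k _ => h.1 k) (by simp) hlogb

theorem two_mul_sum_le {S T U V : Finset (Fin N)} (h : IndexAchievable N A R)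
    (hST : decodeClosure A (S ∪ T) = univ) (hUS : U ⊆ decodeClosure A S)
    (hUT : U ⊆ decodeClosure A T) (hUV : decodeClosure A (U ∪ V) = univ) :
    2 * ∑ k, R k ≤ 2 + (∑ k ∈ S, R k + ∑ k ∈ T, R k + ∑ k ∈ V, R k) := by
  let P (n : ℕ) (W : Finset (Fin N)) : ℝ := ∏ k ∈ W, (msgCard n (R k) : ℝ)
  have hP (n : ℕ) (W : Finset (Fin N)) : 0 < P n W :=
    prod_pos fun k _ => Nat.cast_pos.2 (NeZero.pos _)
  have hlogb : ∀ᶠ n : ℕ in atTop, 2 * Real.logb 2 (P n univ) ≤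
      2 + n * 2 + (Real.logb 2 (P n S) + Real.logb 2 (P n T) + Real.logb 2 (P n V)) := by
    filter_upwards [h.eventually_exists_prod_msgCard_le] with n ⟨C, hC⟩
    have hcard : P n univ ^ 2 ≤ 2 ^ 2 * (2 ^ n * P n S * (2 ^ n * P n T) * P n V) := by
      have hsq := Nat.pow_le_pow_left hC 2
      grw [mul_pow, C.card_correctTuples_sq_le hST hUS hUT hUV] at hsq
      simp only [P]
      exact_mod_cast hsq
    have hmono := Real.logb_le_logb_of_le one_lt_two (pow_pos (hP n univ) 2) hcard
    rw [Real.logb_mul, Real.logb_mul, Real.logb_mul, Real.logb_mul, Real.logb_mul, Real.logb_pow,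
      Real.logb_pow, Real.logb_pow, Real.logb_self_eq_one one_lt_two] at hmono
    · push_cast at hmono
      linarith
    all_goals
      have hS := hP n S
      have hT := hP n T
      have hV := hP n V
      positivity
  have hlim (W : Finset (Fin N)) : Tendsto (fun n : ℕ => Real.logb 2 (P n W) / n) atTop
      (nhds (∑ k ∈ W, R k)) := tendsto_logb_prod_msgCard_div fun k _ => h.1 k
  refine le_of_eventually_logb_le ?_ ?_ hlogb
  · simpa only [mul_div_assoc] using (hlim univ).const_mul 2
  · simpa only [add_div] using ((hlim S).add (hlim T)).add (hlim V)

end IndexAchievable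

end Converse

section FlatCoding

theorem colorable_of_forall_degree_lt {V : Type*} [Fintype V] (G : SimpleGraph V)
    [DecidableRel G.Adj] {k : ℕ} (hdeg : ∀ v, G.degree v < k) : G.Colorable k := by
  classical
  rcases isEmpty_or_nonempty V with _ | ⟨⟨v₀⟩⟩
  · exact .of_isEmpty k
  have : NeZero k := ⟨(Nat.zero_lt_of_lt (hdeg v₀)).ne'⟩
  suffices hpartial : ∀ s : Finset V,
      ∃ c : V → Fin k, ∀ v ∈ s, ∀ w ∈ s, G.Adj v w → c v ≠ c w by
    obtain ⟨c, hc⟩ := hpartial univ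
    exact ⟨SimpleGraph.Coloring.mk c fun {v w} => hc v (mem_univ v) w (mem_univ w)⟩
  intro s
  induction s using Finset.induction_on with
  | empty => exact ⟨fun _ => 0, by simp⟩
  | insert v s hv ih =>
    obtain ⟨c, hc⟩ := ih
    have hcard : #((G.neighborFinset v).image c) < Fintype.card (Fin k) := by
      grw [card_image_le, Fintype.card_fin]
      exact hdeg v
    obtain ⟨x, -, hx⟩ := exists_mem_notMem_of_card_lt_card hcard
    have hx' : ∀ w, G.Adj v w → c w ≠ x := fun w hvw hwx =>
      hx (hwx ▸ mem_image_of_mem c ((G.mem_neighborFinset v w).2 hvw))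
    have hne : ∀ w ∈ s, w ≠ v := fun w hw hwv => hv (hwv ▸ hw)
    refine ⟨Function.update c v x, ?_⟩
    simp only [forall_mem_insert, Function.update_self]
    refine ⟨⟨fun h => (G.irrefl h).elim, fun w hw hvw => ?_⟩, fun w hw => ⟨fun hwv => ?_, ?_⟩⟩
    · rw [Function.update_of_ne (hne w hw)]
      exact (hx' w hvw).symm
    · rw [Function.update_of_ne (hne w hw)]
      exact hx' w hwv.symm
    · intro u hu hwu
      rw [Function.update_of_ne (hne w hw), Function.update_of_ne (hne u hu)]
      exact hc w hw u hu hwu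

variable {K J : Type*} {γ : K → Type*}

/-- The graph joining two distinct tuples when some receiver `j`, who knows the coordinates in
`B j`, cannot tell them apart without the codeword. Its proper colorings are the codes from which
every receiver recovers the whole tuple. -/
def confusionGraph (γ : K → Type*) (B : J → Finset K) : SimpleGraph (∀ k, γ k) where
  Adj s t := s ≠ t ∧ ∃ j, ∀ k ∈ B j, s k = t k
  symm := ⟨fun _ _ h => ⟨h.1.symm, h.2.imp fun _ hj k hk => (hj k hk).symm⟩⟩
  loopless := ⟨fun _ h => h.1 rfl⟩

variable [Fintype K] [DecidableEq K] [Fintype J] [∀ k, Fintype (γ k)]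

lemma degree_confusionGraph_le (B : J → Finset K) [DecidableRel (confusionGraph γ B).Adj]
    (t : ∀ k, γ k) :
    (confusionGraph γ B).degree t ≤ ∑ j, ∏ k ∈ (B j)ᶜ, Fintype.card (γ k) := by
  classical
  let agree (j : J) : Finset (∀ k, γ k) := Fintype.piFinset fun k => if k ∈ B j then {t k} else univ
  have hcard (j : J) : #(agree j) = ∏ k ∈ (B j)ᶜ, Fintype.card (γ k) := by
    rw [Fintype.card_piFinset, ← prod_mul_prod_compl (B j),
      prod_eq_one fun k hk => by rw [if_pos hk, card_singleton], one_mul]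
    exact prod_congr rfl fun k hk => by rw [if_neg (mem_compl.1 hk), card_univ]
  have hsub : (confusionGraph γ B).neighborFinset t ⊆ univ.biUnion agree := by
    intro s hs
    obtain ⟨-, j, hj⟩ := ((confusionGraph γ B).mem_neighborFinset t s).1 hs
    refine mem_biUnion.2 ⟨j, mem_univ j, Fintype.mem_piFinset.2 fun k => ?_⟩
    split_ifs with hk
    · exact mem_singleton.2 (hj k hk).symm
    · exact mem_univ _
  calc (confusionGraph γ B).degree t = #((confusionGraph γ B).neighborFinset t) := rfl
    _ ≤ #(univ.biUnion agree) := card_le_card hsub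
    _ ≤ ∑ j, #(agree j) := card_biUnion_le
    _ = ∑ j, ∏ k ∈ (B j)ᶜ, Fintype.card (γ k) := sum_congr rfl fun j _ => hcard j

theorem exists_flat_encoder {X : Type*} [Fintype X] {B : J → Finset K}
    (hB : ∑ j, ∏ k ∈ (B j)ᶜ, Fintype.card (γ k) < Fintype.card X) :
    ∃ enc : (∀ k, γ k) → X, ∀ j s t, enc s = enc t → (∀ k ∈ B j, s k = t k) → s = t := by
  classical
  have hcolor : (confusionGraph γ B).Colorable (Fintype.card X) :=
    colorable_of_forall_degree_lt _ fun t => (degree_confusionGraph_le B t).trans_lt hB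
  let enc := hcolor.toColoring le_rfl
  refine ⟨enc, fun j s t henc hst => ?_⟩
  by_contra hne
  exact enc.valid (show (confusionGraph γ B).Adj s t from ⟨hne, j, hst⟩) henc

end FlatCoding

section ZeroErrorCodes

variable {N n : ℕ} {A : Fin N → Finset (Fin N)} {R : Fin N → ℝ} {X : Type*}

/-- Zero-error decodability: the codeword and the side information of each receiver determine the
message that the receiver wants. -/
def IsDecodable (A : Fin N → Finset (Fin N)) {M : Fin N → ℕ} (enc : (∀ j, Fin (M j)) → X) : Prop :=
  ∀ j, Function.FactorsThrough (fun m : ∀ j, Fin (M j) => m j)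
    fun m => (enc m, fun k : {k // k ∈ A j} => m k.1)

lemma IsDecodable.exists_indexCode_Pe_eq_zero
    {enc : (∀ j, Fin (msgCard n (R j))) → (Fin n → Bool)} (henc : IsDecodable A enc) :
    ∃ C : IndexCode N A R n, C.Pe = 0 := by
  let dec (j : Fin N) (x : Fin n → Bool)
      (s : ∀ k : {k // k ∈ A j}, Fin (msgCard n (R k.1))) : Fin (msgCard n (R j)) :=
    Function.extend (fun m => (enc m, fun k : {k // k ∈ A j} => m k.1)) (fun m => m j)
      (fun _ => 0) (x, s)
  have hdec (m : ∀ j, Fin (msgCard n (R j))) (j : Fin N) :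
      dec j (enc m) (fun k => m k.1) = m j := (henc j).extend_apply _ m
  refine ⟨⟨enc, dec⟩, ?_⟩
  simp only [IndexCode.Pe, hdec, ne_eq, not_true_eq_false, exists_false, Nat.card_of_isEmpty,
    Nat.cast_zero, zero_div]

instance instNonemptyIndexCode : Nonempty (IndexCode N A R n) :=
  ⟨⟨fun _ _ => false, fun _ _ _ => 0⟩⟩

lemma indexAchievable_of_eventually_exists_Pe_eq_zero (hR : ∀ j, 0 ≤ R j)
    (h : ∀ᶠ n : ℕ in atTop, ∃ C : IndexCode N A R n, C.Pe = 0) : IndexAchievable N A R := by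
  refine ⟨hR, fun n => Classical.epsilon fun C => C.Pe = 0, ?_⟩
  refine tendsto_const_nhds.congr' ?_
  filter_upwards [h] with n hn
  exact (Classical.epsilon_spec hn).symm

end ZeroErrorCodes

section CyclicComposites

open Sum

variable {N : ℕ} [NeZero N] {A : Fin N → Finset (Fin N)} {M : Fin N → ℕ} {q : Fin N ⊕ Fin N → ℕ}

/-- The composite messages that receiver `j` can compute from its side information: `inl i` combines
parts of the messages `i` and `i + 1`, and `inr i` is a part of message `i`. -/
def knownComposites (A : Fin N → Finset (Fin N)) (j : Fin N) : Finset (Fin N ⊕ Fin N) :=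
  ({i | i ∈ A j ∧ i + 1 ∈ A j} : Finset (Fin N)).disjSum (A j)

/-- The composite messages obtained by splitting each message `j` into a left, a middle and a right
part: `inl i` is the sum of the right part of message `i` and the left part of message `i + 1`, and
`inr i` is the middle part of message `i`. -/
def cyclicComposites [∀ i, NeZero (q (inl i))]
    (φ : ∀ j, Fin (M j) ↪ Fin (q (inl (j - 1))) × Fin (q (inr j)) × Fin (q (inl j)))
    (m : ∀ j, Fin (M j)) : ∀ k, Fin (q k)
  | inl i => (φ i (m i)).2.2 +
      (φ (i + 1) (m (i + 1))).1.cast (congrArg (fun k => q (inl k)) (add_sub_cancel_right i 1))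
  | inr i => (φ i (m i)).2.1

variable [∀ i, NeZero (q (inl i))]
  {φ : ∀ j, Fin (M j) ↪ Fin (q (inl (j - 1))) × Fin (q (inr j)) × Fin (q (inl j))}
  {m m' : ∀ j, Fin (M j)}

lemma cyclicComposites_eq_of_mem_knownComposites {j : Fin N} (hm : ∀ i ∈ A j, m i = m' i)
    {k : Fin N ⊕ Fin N} (hk : k ∈ knownComposites A j) :
    cyclicComposites φ m k = cyclicComposites φ m' k := by
  cases k with
  | inl i =>
    obtain ⟨-, hi, hi'⟩ := mem_filter.1 (inl_mem_disjSum.1 hk)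
    simp only [cyclicComposites, hm i hi, hm (i + 1) hi']
  | inr i => simp only [cyclicComposites, hm i (inr_mem_disjSum.1 hk)]

lemma eq_of_cyclicComposites_eq {j : Fin N} (h : cyclicComposites φ m = cyclicComposites φ m')
    (hprev : m (j - 1) = m' (j - 1)) (hnext : m (j + 1) = m' (j + 1)) : m j = m' j := by
  obtain ⟨i, rfl⟩ : ∃ i, j = i + 1 := ⟨j - 1, (sub_add_cancel j 1).symm⟩
  rw [add_sub_cancel_right] at hprev
  have hleft := congrFun h (inl i)
  have hmiddle := congrFun h (inr (i + 1))
  have hright := congrFun h (inl (i + 1))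
  simp only [cyclicComposites, hprev, add_right_inj, Fin.cast_inj] at hleft
  simp only [cyclicComposites, hnext, add_left_inj] at hright
  exact (φ (i + 1)).injective (Prod.ext hleft (Prod.ext hmiddle hright))

theorem exists_isDecodable_of_cyclicComposites {X : Type*} [Fintype X]
    (hA : ∀ j, j - 1 ∈ A j ∧ j + 1 ∈ A j)
    (hM : ∀ j, M j ≤ q (inl (j - 1)) * (q (inr j) * q (inl j)))
    (hq : ∑ j, ∏ k ∈ (knownComposites A j)ᶜ, q k < Fintype.card X) :
    ∃ enc : (∀ j, Fin (M j)) → X, IsDecodable A enc := by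
  have hφ (j : Fin N) :
      Nonempty (Fin (M j) ↪ Fin (q (inl (j - 1))) × Fin (q (inr j)) × Fin (q (inl j))) := by
    refine Function.Embedding.nonempty_of_card_le ?_
    simpa only [Fintype.card_prod, Fintype.card_fin] using hM j
  let φ := fun j => (hφ j).some
  obtain ⟨enc, henc⟩ := exists_flat_encoder (γ := fun k => Fin (q k)) (B := knownComposites A)
    (by simpa only [Fintype.card_fin] using hq)
  refine ⟨fun m => enc (cyclicComposites φ m), fun j m m' h => ?_⟩
  obtain ⟨hcode, hside⟩ := Prod.ext_iff.1 h
  have hagree : ∀ i ∈ A j, m i = m' i := fun i hi => congrFun hside ⟨i, hi⟩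
  exact eq_of_cyclicComposites_eq
    (henc j _ _ hcode fun k hk => cyclicComposites_eq_of_mem_knownComposites hagree hk)
    (hagree _ (hA j).1) (hagree _ (hA j).2)

variable {r : Fin N ⊕ Fin N → ℝ}

theorem indexAchievable_of_cyclicComposites (hA : ∀ j, j - 1 ∈ A j ∧ j + 1 ∈ A j)
    (hr : ∀ k, 0 ≤ r k) (hsum : ∀ j, ∑ k ∈ (knownComposites A j)ᶜ, r k < 1) :
    IndexAchievable N A fun j => r (inl (j - 1)) + (r (inr j) + r (inl j)) := by
  refine indexAchievable_of_eventually_exists_Pe_eq_zero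
    (fun j => add_nonneg (hr _) (add_nonneg (hr _) (hr _))) ?_
  filter_upwards [eventually_sum_prod_msgCard_lt_two_pow hr hsum] with n hn
  obtain ⟨enc, henc⟩ := exists_isDecodable_of_cyclicComposites (X := Fin n → Bool)
    (q := fun k => msgCard n (r k)) hA
    (fun j => msgCard_add_le.trans (Nat.mul_le_mul_left _ msgCard_add_le))
    (by simpa only [Fintype.card_pi_const, Fintype.card_bool] using hn)
  exact henc.exists_indexCode_Pe_eq_zero

theorem mem_closure_indexAchievable_of_cyclicComposites (hA : ∀ j, j - 1 ∈ A j ∧ j + 1 ∈ A j)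
    (hr : ∀ k, 0 ≤ r k) (hsum : ∀ j, ∑ k ∈ (knownComposites A j)ᶜ, r k ≤ 1) :
    (fun j => r (inl (j - 1)) + (r (inr j) + r (inl j))) ∈ closure {R | IndexAchievable N A R} := by
  set R : Fin N → ℝ := fun j => r (inl (j - 1)) + (r (inr j) + r (inl j))
  have hlim : Tendsto (fun t : ℝ => t • R) (nhdsWithin 1 (Set.Iio 1)) (nhds R) := by
    have hcont : Continuous fun t : ℝ => t • R := by fun_prop
    simpa only [one_smul] using (hcont.tendsto 1).mono_left nhdsWithin_le_nhds
  refine mem_closure_of_tendsto hlim ?_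
  filter_upwards [Ioo_mem_nhdsLT zero_lt_one] with t ⟨ht0, ht1⟩
  have hscaled : IndexAchievable N A fun j =>
      (t • r) (inl (j - 1)) + ((t • r) (inr j) + (t • r) (inl j)) := by
    refine indexAchievable_of_cyclicComposites hA (fun k => mul_nonneg ht0.le (hr k)) fun j => ?_
    calc ∑ k ∈ (knownComposites A j)ᶜ, (t • r) k = t * ∑ k ∈ (knownComposites A j)ᶜ, r k :=
          (mul_sum _ _ _).symm
      _ ≤ t := mul_le_of_le_one_right ht0.le (hsum j)
      _ < 1 := ht1
  convert hscaled using 1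
  ext j
  simp only [R, Pi.smul_apply, smul_eq_mul, mul_add]

end CyclicComposites

section SixMessages

/-- The side information sets `(j | j - 1, j + 1, j + 2)` of the problem, indices modulo `6`. -/
abbrev sixMessageSideInfo (j : Fin 6) : Finset (Fin 6) := {j - 1, j + 1, j + 2}

/-- The polytope that turns out to be the capacity region of the problem. -/
def sixMessageRegion : Set (Fin 6 → ℝ) :=
  {R | (∀ j, 0 ≤ R j) ∧ ∀ j, R j + R (j + 2) ≤ 1 ∧ R j + R (j + 3) ≤ 1 ∧
    R j + R (j + 1) + R (j + 2) + R (j + 3) + R (j + 4) ≤ 2}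

lemma isClosed_sixMessageRegion : IsClosed sixMessageRegion := by
  simp only [sixMessageRegion, Set.ofPred_and, Set.ofPred_forall]
  refine (isClosed_iInter fun j => isClosed_le (by fun_prop) (by fun_prop)).inter
    (isClosed_iInter fun j => .inter ?_ (.inter ?_ ?_)) <;>
  exact isClosed_le (by fun_prop) (by fun_prop)

variable {R : Fin 6 → ℝ}

namespace IndexAchievable

lemma add_two_le_one (h : IndexAchievable 6 sixMessageSideInfo R) (j : Fin 6) :
    R j + R (j + 2) ≤ 1 := by
  have hclosure : decodeClosure sixMessageSideInfo {j, j + 2}ᶜ = univ := by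
    clear h
    revert j
    decide
  simpa using h.sum_le_one_s11 hclosure

lemma add_three_le_one (h : IndexAchievable 6 sixMessageSideInfo R) (j : Fin 6) :
    R j + R (j + 3) ≤ 1 := by
  have hclosure : decodeClosure sixMessageSideInfo {j, j + 3}ᶜ = univ := by
    clear h
    revert j
    decide
  simpa using h.sum_le_one_s11 hclosure

lemma sum_five_le_two (h : IndexAchievable 6 sixMessageSideInfo R) (j : Fin 6) :
    R j + R (j + 1) + R (j + 2) + R (j + 3) + R (j + 4) ≤ 2 := by
  let S : Finset (Fin 6) := {j + 2, j + 4, j + 5}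
  let T : Finset (Fin 6) := {j, j + 3, j + 5}
  let U : Finset (Fin 6) := {j + 3, j + 4, j + 5}
  obtain ⟨hST, hUS, hUT, hUV⟩ :
      decodeClosure sixMessageSideInfo (S ∪ T) = univ ∧
        U ⊆ decodeClosure sixMessageSideInfo S ∧ U ⊆ decodeClosure sixMessageSideInfo T ∧
        decodeClosure sixMessageSideInfo (U ∪ {j + 1}) = univ := by
    clear h
    revert j
    decide
  have hbound := h.two_mul_sum_le hST hUS hUT hUV
  have htotal : ∑ k, R k = R j + R (j + 1) + R (j + 2) + R (j + 3) + R (j + 4) + R (j + 5) := by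
    rw [← Equiv.sum_comp (Equiv.addLeft j)]
    simp [Fin.sum_univ_six]
  have hS : ∑ k ∈ S, R k = R (j + 2) + R (j + 4) + R (j + 5) := by simp [S, add_assoc]
  have hT : ∑ k ∈ T, R k = R j + R (j + 3) + R (j + 5) := by simp [T, add_assoc]
  rw [htotal, hS, hT, sum_singleton] at hbound
  linarith

lemma mem_sixMessageRegion (h : IndexAchievable 6 sixMessageSideInfo R) : R ∈ sixMessageRegion :=
  ⟨h.1, fun j => ⟨h.add_two_le_one j, h.add_three_le_one j, h.sum_five_le_two j⟩⟩

end IndexAchievable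

/-- The rate of the composite message that combines parts of the messages `i` and `i + 1`. Receiver
`i + 3` knows none of the messages `i`, `i + 1` and `i + 3`, and saving this rate on the first two
brings the total rate that it must resolve down to `1`. -/
noncomputable def overlapRate (R : Fin 6 → ℝ) (i : Fin 6) : ℝ :=
  max 0 (R i + R (i + 1) + R (i + 3) - 1)

lemma overlapRate_add_overlapRate_le (hR : R ∈ sixMessageRegion) (j : Fin 6) :
    overlapRate R (j - 1) + overlapRate R j ≤ R j := by
  obtain ⟨i, rfl⟩ : ∃ i, j = i + 1 := ⟨j - 1, (sub_add_cancel j 1).symm⟩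
  obtain ⟨-, hthree, hfive⟩ := hR.2 i
  obtain ⟨htwo, -, -⟩ := hR.2 (i + 2)
  have hnonneg := hR.1 (i + 1)
  simp only [overlapRate, add_sub_cancel_right, add_assoc, Fin.reduceAdd]
    at htwo hfive ⊢
  rcases max_cases 0 (R i + (R (i + 1) + R (i + 3)) - 1) with h | h <;>
    rcases max_cases 0 (R (i + 1) + (R (i + 2) + R (i + 4)) - 1) with h' | h' <;> linarith

/-- The rates of the composite messages that achieve `R`: the middle part of each message takes the
rate that its left and right parts leave over. -/
noncomputable def compositeRate (R : Fin 6 → ℝ) : Fin 6 ⊕ Fin 6 → ℝ :=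
  Sum.elim (overlapRate R) fun j => R j - overlapRate R (j - 1) - overlapRate R j

lemma compositeRate_nonneg (hR : R ∈ sixMessageRegion) : ∀ k, 0 ≤ compositeRate R k
  | .inl _ => le_max_left _ _
  | .inr j => by
    simp only [compositeRate, Sum.elim_inr]
    linarith [overlapRate_add_overlapRate_le hR j]

lemma sum_compositeRate_le_one (R : Fin 6 → ℝ) (j : Fin 6) :
    ∑ k ∈ (knownComposites sixMessageSideInfo j)ᶜ, compositeRate R k ≤ 1 := by
  have hunknown : (knownComposites sixMessageSideInfo j)ᶜ =
      ({j, j + 2, j + 3, j + 4, j + 5} : Finset (Fin 6)).disjSum {j, j + 3, j + 4} := by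
    revert j
    decide
  have hpred : j - 1 = j + 5 := sub_eq_add_neg j 1
  have hoverlap : R (j + 3) + R (j + 4) + R j - 1 ≤ overlapRate R (j + 3) := by
    have hmax := le_max_right 0 (R (j + 3) + R (j + 3 + 1) + R (j + 3 + 3) - 1)
    simpa only [overlapRate, add_assoc, Fin.reduceAdd, add_zero] using hmax
  calc ∑ k ∈ (knownComposites sixMessageSideInfo j)ᶜ, compositeRate R k
      = R j + R (j + 3) + R (j + 4) - overlapRate R (j + 3) := by
        rw [hunknown, sum_disjSum]
        simp only [compositeRate, Sum.elim_inl, Sum.elim_inr, mem_insert, mem_singleton,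
          left_eq_add, add_right_inj, Fin.reduceEq, or_self, not_false_eq_true, sum_insert,
          sum_singleton, hpred, add_sub_assoc, Fin.reduceSub]
        ring
    _ ≤ 1 := by linarith

lemma sixMessageRegion_subset_closure_indexAchievable :
    sixMessageRegion ⊆ closure {R | IndexAchievable 6 sixMessageSideInfo R} := by
  intro R hR
  have hrate : R = fun j => compositeRate R (.inl (j - 1)) +
      (compositeRate R (.inr j) + compositeRate R (.inl j)) := by
    ext j
    simp only [compositeRate, Sum.elim_inl, Sum.elim_inr]
    ring
  rw [hrate]
  exact mem_closure_indexAchievable_of_cyclicComposites (by decide) (compositeRate_nonneg hR)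
    (sum_compositeRate_le_one R)

end SixMessages

/-- **Capacity region of the symmetric 6-message index coding problem with U = 1, D = 2**,
i.e. `(j | j-1, j+1, j+2)` with indices mod 6 (Example 4): the capacity region equals the
set of nonnegative rate tuples satisfying, for every `j` (indices mod 6),
`R j + R (j+2) ≤ 1`, `R j + R (j+3) ≤ 1`, and
`R j + R (j+1) + R (j+2) + R (j+3) + R (j+4) ≤ 2`. -/
theorem capacity_region_six_message_U1_D2 :
    closure {R : Fin 6 → ℝ |
        IndexAchievable 6 (fun j => ({j - 1, j + 1, j + 2} : Finset (Fin 6))) R} =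
      {R : Fin 6 → ℝ | (∀ j, 0 ≤ R j) ∧
        ∀ j : Fin 6,
          R j + R (j + 2) ≤ 1 ∧
          R j + R (j + 3) ≤ 1 ∧
          R j + R (j + 1) + R (j + 2) + R (j + 3) + R (j + 4) ≤ 2} := by
  change closure {R | IndexAchievable 6 sixMessageSideInfo R} = sixMessageRegion
  refine Set.Subset.antisymm (closure_minimal ?_ isClosed_sixMessageRegion)
    sixMessageRegion_subset_closure_indexAchievable
  exact fun R hR => hR.mem_sixMessageRegion
end

section
/- Fourier–Motzkin elimination identity for the 5-cycle composite-coding region. Let (R_1,...,R_5) be a tuple of nonnegative reals, with indices understood modulo 5 (so R_6 = R_1, etc.). Then the following are equivalent: (i) there exist nonnegative reals S_1, S_2, S_3, S_4, S_5 with S_1 + S_2 + S_3 + S_4 + S_5 ≤ 1 such that R_j ≤ S_{j−1} + S_j for every j ∈ {1,...,5} (indices of S modulo 5); (ii) R_j + R_{j+2} ≤ 1 for every j ∈ {1,...,5} and R_1 + R_2 + R_3 + R_4 + R_5 ≤ 2. -/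
/-!
View `R` as vertex demands and `S` as edge weights on a cycle. Necessity is weak duality: adding the
covering constraints over a stable set counts each edge at most once, and adding all of them counts
each edge exactly twice. For sufficiency, cut the cycle at the edge `{4, 0}`, of weight `t`. On the
remaining path only the prefix sums of the edge weights matter, and the least admissible ones are
given by maxima. For `t ≥ 0` they leave the total weight at most `c` when `R 0 + R 2 + R 4 - c ≤ t`,
`t ≤ c - R 1 - R 3` and `t ≤ c - R 2`; `t = max 0 (R 0 + R 2 + R 4 - c)` satisfies all three.
-/

section WeakDuality

variable {G M : Type*} [AddGroup G] [Fintype G] [AddCommMonoid M] [PartialOrder M]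
  [IsOrderedAddMonoid M] {g : G} {R S : G → M}

theorem sum_stable_le_sum_of_le_add_shift (hS : ∀ j, 0 ≤ S j)
    (hRS : ∀ j, R j ≤ S (j - g) + S j) {T : Finset G} (hT : ∀ j ∈ T, j - g ∉ T) :
    ∑ j ∈ T, R j ≤ ∑ j, S j := by
  have hdisj : Disjoint (T.map (Equiv.subRight g).toEmbedding) T :=
    Finset.disjoint_left.2 (Finset.forall_mem_map.2 hT)
  calc ∑ j ∈ T, R j ≤ ∑ j ∈ T, (S (j - g) + S j) := Finset.sum_le_sum fun j _ => hRS j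
    _ = ∑ j ∈ (T.map (Equiv.subRight g).toEmbedding).disjUnion T hdisj, S j := by
      simp [Finset.sum_add_distrib, Finset.sum_disjUnion]
    _ ≤ ∑ j, S j := Finset.sum_le_univ_sum_of_nonneg hS

theorem sum_le_two_nsmul_sum_of_le_add_shift (hRS : ∀ j, R j ≤ S (j - g) + S j) :
    ∑ j, R j ≤ 2 • ∑ j, S j := by
  have hshift : ∑ j, S (j - g) = ∑ j, S j := (Equiv.subRight g).sum_comp S
  calc ∑ j, R j ≤ ∑ j, (S (j - g) + S j) := Finset.sum_le_sum fun j _ => hRS j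
    _ = ∑ j, S (j - g) + ∑ j, S j := Finset.sum_add_distrib
    _ = 2 • ∑ j, S j := by rw [hshift, two_nsmul]

end WeakDuality

section FiveCycle

variable {M : Type*} [AddCommGroup M] [LinearOrder M] [IsOrderedAddMonoid M]
  {R : Fin 5 → M} {c t : M}

-- The prefix sums, starting with the edge `{4, 0}`, are `t ≤ p₀ ≤ p₁ ≤ p₂ ≤ c`.
theorem exists_five_cycle_cover_of_prefix_sums {p₀ p₁ p₂ : M}
    (ht : 0 ≤ t) (htp : t ≤ p₀) (hp₀₁ : p₀ ≤ p₁) (hp₁₂ : p₁ ≤ p₂) (hpc : p₂ ≤ c)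
    (h₀ : R 0 ≤ p₀) (h₁ : t + R 1 ≤ p₁) (h₂ : p₀ + R 2 ≤ p₂) (h₃ : p₁ + R 3 ≤ c)
    (h₄ : p₂ + R 4 ≤ c + t) :
    ∃ S : Fin 5 → M, (∀ j, 0 ≤ S j) ∧ ∑ j, S j ≤ c ∧ ∀ j, R j ≤ S (j - 1) + S j := by
  refine ⟨![p₀ - t, p₁ - p₀, p₂ - p₁, c - p₂, t], ?_, ?_, ?_⟩
  · simp [Fin.forall_fin_succ, *]
  · simp [Fin.sum_univ_five]
  · have cover₀ : R 0 ≤ t + (p₀ - t) := by simpa using h₀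
    have cover₁ : R 1 ≤ (p₀ - t) + (p₁ - p₀) := by grind
    have cover₂ : R 2 ≤ (p₁ - p₀) + (p₂ - p₁) := by grind
    have cover₃ : R 3 ≤ (p₂ - p₁) + (c - p₂) := by grind
    have cover₄ : R 4 ≤ (c - p₂) + t := by grind
    intro j
    fin_cases j <;> assumption

theorem exists_five_cycle_cover_of_cut_weight (hR : ∀ j, 0 ≤ R j)
    (hpair : ∀ j, R j + R (j + 2) ≤ c) (ht : 0 ≤ t) (h₀₂₄ : R 0 + R 2 + R 4 ≤ c + t)
    (h₁₃ : t + R 1 + R 3 ≤ c) (h₂ : t + R 2 ≤ c) :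
    ∃ S : Fin 5 → M, (∀ j, 0 ≤ S j) ∧ ∑ j, S j ≤ c ∧ ∀ j, R j ≤ S (j - 1) + S j := by
  have h₀₂ : R 0 + R 2 ≤ c := hpair 0
  have h₂₄ : R 2 + R 4 ≤ c := hpair 2
  have h₃₀ : R 3 + R 0 ≤ c := hpair 3
  have h₄₁ : R 4 + R 1 ≤ c := hpair 4
  have hR₁ := hR 1
  have hR₂ := hR 2
  have hR₃ := hR 3
  let p₀ := max t (R 0)
  let p₁ := max p₀ (t + R 1)
  let p₂ := max p₁ (p₀ + R 2)
  have hp₂c : p₂ ≤ c := by grind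
  have h₃ : p₁ + R 3 ≤ c := by grind
  have h₄ : p₂ + R 4 ≤ c + t := by grind
  exact exists_five_cycle_cover_of_prefix_sums ht (le_max_left t (R 0))
    (le_max_left p₀ (t + R 1)) (le_max_left p₁ (p₀ + R 2)) hp₂c
    (le_max_right t (R 0)) (le_max_right p₀ (t + R 1)) (le_max_right p₁ (p₀ + R 2)) h₃ h₄

theorem exists_five_cycle_cover (hR : ∀ j, 0 ≤ R j) (hpair : ∀ j, R j + R (j + 2) ≤ c)
    (hsum : ∑ j, R j ≤ 2 • c) :
    ∃ S : Fin 5 → M, (∀ j, 0 ≤ S j) ∧ ∑ j, S j ≤ c ∧ ∀ j, R j ≤ S (j - 1) + S j := by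
  have h₀₂ : R 0 + R 2 ≤ c := hpair 0
  have h₁₃ : R 1 + R 3 ≤ c := hpair 1
  have h₂₄ : R 2 + R 4 ≤ c := hpair 2
  have hR₀ := hR 0
  rw [Fin.sum_univ_five] at hsum
  let t := max 0 (R 0 + R 2 + R 4 - c)
  have ht₀₂₄ : R 0 + R 2 + R 4 ≤ c + t := sub_le_iff_le_add'.1 (le_max_right _ _)
  have ht₁₃ : t + R 1 + R 3 ≤ c := by grind
  have ht₂ : t + R 2 ≤ c := by grind
  exact exists_five_cycle_cover_of_cut_weight hR hpair (le_max_left _ _) ht₀₂₄ ht₁₃ ht₂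

theorem fourier_motzkin_five_cycle_general (c : M) (hR : ∀ j, 0 ≤ R j) :
    (∃ S : Fin 5 → M, (∀ j, 0 ≤ S j) ∧ ∑ j, S j ≤ c ∧ ∀ j, R j ≤ S (j - 1) + S j) ↔
      (∀ j, R j + R (j + 2) ≤ c) ∧ ∑ j, R j ≤ 2 • c := by
  refine ⟨?_, fun ⟨hpair, hsum⟩ => exists_five_cycle_cover hR hpair hsum⟩
  rintro ⟨S, hS, hSc, hRS⟩
  have hsum : ∑ j, R j ≤ 2 • c :=
    (sum_le_two_nsmul_sum_of_le_add_shift hRS).trans (nsmul_le_nsmul_right hSc 2)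
  refine ⟨fun j => ?_, hsum⟩
  have hstable : ∀ i ∈ ({j, j + 2} : Finset (Fin 5)), i - 1 ∉ ({j, j + 2} : Finset (Fin 5)) := by
    decide +revert
  have hne : j ≠ j + 2 := by decide +revert
  simpa only [Finset.sum_pair hne] using
    (sum_stable_le_sum_of_le_add_shift hS hRS hstable).trans hSc

end FiveCycle

/-- **Fourier–Motzkin elimination identity for the 5-cycle composite-coding region**:
for nonnegative reals `R : Fin 5 → ℝ` (indices mod 5), the existence of nonnegative
composite rates `S : Fin 5 → ℝ` (where `S j` is the rate of the composite index for the
pair `{j, j+1}`) with `∑ S ≤ 1` and `R j ≤ S (j-1) + S j` for all `j` is equivalent to the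
inequalities `R j + R (j+2) ≤ 1` for all `j` together with `∑ R ≤ 2`. -/
theorem fourier_motzkin_five_cycle (R : Fin 5 → ℝ) (hR : ∀ j, 0 ≤ R j) :
    (∃ S : Fin 5 → ℝ, (∀ j, 0 ≤ S j) ∧
        S 0 + S 1 + S 2 + S 3 + S 4 ≤ 1 ∧
        ∀ j : Fin 5, R j ≤ S (j - 1) + S j) ↔
      ((∀ j : Fin 5, R j + R (j + 2) ≤ 1) ∧
        R 0 + R 1 + R 2 + R 3 + R 4 ≤ 2) := by
  simpa [Fin.sum_univ_five] using fourier_motzkin_five_cycle_general 1 hR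
end

section
/- Submodularity consequence for the 5-cycle outer bound. Let T : 2^{{1,...,5}} → ℝ be a set function satisfying T(∅) = 0, T({1,...,5}) = 1, T(J) ≤ T(K) whenever J ⊆ K ⊆ {1,...,5}, and T(J ∩ K) + T(J ∪ K) ≤ T(J) + T(K) for all J, K ⊆ {1,...,5}. Let (R_1,...,R_5) be nonnegative reals such that, with indices modulo 5, R_j ≤ T({j, j+2, j+3}) − T({j+2, j+3}) for every j ∈ {1,...,5}. Then R_1 + R_2 + R_3 + R_4 + R_5 ≤ 2. -/
/-!
Apply the bound at two receivers `x` and `y` and combine them by submodularity: the rates satisfy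
`R x + R y ≤ 2 T(univ) - T(B x ∩ B y) - T(B x ∪ B y)`. An acyclic set of receivers inside
`B x ∩ B y` and one inside `B x ∪ B y` have total rates at most `T(B x ∩ B y) - T(∅)` and
`T(B x ∪ B y) - T(∅)`, so all these rates together sum to at most `2 (T(univ) - T(∅))`.
In the 5-cycle, the adjacent receivers `0, 1` and the sets `{3}`, `{2, 4}` exhaust all receivers.
-/

section Submodular

variable {L M : Type*} [Lattice L] [AddCommGroup M] [PartialOrder M]

/-- Submodularity of a function on a lattice; on `Finset ι` the operations `⊓` and `⊔` are
intersection and union of sets of messages. -/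
def IsSubmodular (f : L → M) : Prop :=
  ∀ a b, f (a ⊓ b) + f (a ⊔ b) ≤ f a + f b

theorem IsSubmodular.sup_sub_le_sup_sub [IsOrderedAddMonoid M] {f : L → M}
    (hsub : IsSubmodular f) (hmono : Monotone f) (a : L) {s t : L} (hst : s ≤ t) :
    f (a ⊔ t) - f t ≤ f (a ⊔ s) - f s := by
  have hmeet : f s ≤ f ((a ⊔ s) ⊓ t) := hmono (le_inf le_sup_right hst)
  have hjoin : f ((a ⊔ s) ⊓ t) + f (a ⊔ t) ≤ f (a ⊔ s) + f t := by
    simpa [sup_assoc, sup_eq_right.mpr hst] using hsub (a ⊔ s) t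
  rw [sub_le_sub_iff, add_comm]
  exact (add_le_add_left hmeet _).trans hjoin

end Submodular

section IndexCoding

variable {ι M : Type*} [DecidableEq ι] [AddCommGroup M] [PartialOrder M]

/-- The outer bound of index coding for rates `R`, where `B j` is the interfering set of
receiver `j`: the messages that `j` neither wants nor has as side information. -/
def SatisfiesOuterBound (T : Finset ι → M) (B : ι → Finset ι) (R : ι → M) : Prop :=
  ∀ j, R j ≤ T (insert j (B j)) - T (B j)

/-- Acyclicity of the side information graph induced on `I`, encoded as the existence, in every
nonempty subset, of a receiver for which all other members of the subset are interfering. -/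
def IsAcyclicSet (B : ι → Finset ι) (I : Finset ι) : Prop :=
  ∀ S ⊆ I, S.Nonempty → ∃ j ∈ S, S.erase j ⊆ B j

variable [IsOrderedAddMonoid M] {T : Finset ι → M} {B : ι → Finset ι} {R : ι → M}

theorem SatisfiesOuterBound.le_sub_erase (hR : SatisfiesOuterBound T B R)
    (hsub : IsSubmodular T) (hmono : Monotone T) {S : Finset ι} {j : ι} (hj : j ∈ S)
    (hS : S.erase j ⊆ B j) : R j ≤ T S - T (S.erase j) := by
  calc R j ≤ T (insert j (B j)) - T (B j) := hR j
    _ ≤ T (insert j (S.erase j)) - T (S.erase j) := hsub.sup_sub_le_sup_sub hmono {j} hS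
    _ = T S - T (S.erase j) := by rw [Finset.insert_erase hj]

theorem SatisfiesOuterBound.sum_le_of_isAcyclicSet (hR : SatisfiesOuterBound T B R)
    (hsub : IsSubmodular T) (hmono : Monotone T) {I : Finset ι} (hI : IsAcyclicSet B I) :
    ∑ j ∈ I, R j ≤ T I - T ∅ := by
  induction I using Finset.strongInduction with
  | H I ih =>
    obtain rfl | hne := I.eq_empty_or_nonempty
    · simp
    obtain ⟨j, hj, hjB⟩ := hI I subset_rfl hne
    have hrest : ∑ i ∈ I.erase j, R i ≤ T (I.erase j) - T ∅ :=
      ih _ (Finset.erase_ssubset hj) fun S hS ↦ hI S (hS.trans (I.erase_subset j))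
    calc ∑ i ∈ I, R i = R j + ∑ i ∈ I.erase j, R i := (Finset.add_sum_erase I R hj).symm
      _ ≤ (T I - T (I.erase j)) + (T (I.erase j) - T ∅) :=
        add_le_add (hR.le_sub_erase hsub hmono hj hjB) hrest
      _ = T I - T ∅ := sub_add_sub_cancel ..

theorem SatisfiesOuterBound.add_le_two_nsmul_sub [Fintype ι] (hR : SatisfiesOuterBound T B R)
    (hsub : IsSubmodular T) (hmono : Monotone T) (x y : ι) :
    R x + R y ≤ 2 • T Finset.univ - (T (B x ∩ B y) + T (B x ∪ B y)) := by
  have hle (j : ι) : R j ≤ T Finset.univ - T (B j) :=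
    (hR j).trans (sub_le_sub_right (hmono (Finset.subset_univ _)) _)
  calc R x + R y ≤ (T Finset.univ - T (B x)) + (T Finset.univ - T (B y)) :=
        add_le_add (hle x) (hle y)
    _ = 2 • T Finset.univ - (T (B x) + T (B y)) := by abel
    _ ≤ 2 • T Finset.univ - (T (B x ∩ B y) + T (B x ∪ B y)) :=
        sub_le_sub_left (hsub (B x) (B y)) _

theorem five_cycle_submodular_sum_bound_general [Fintype ι] (hsub : IsSubmodular T)
    (hmono : Monotone T) (hR : SatisfiesOuterBound T B R) (x y : ι) {I J : Finset ι}
    (hI : IsAcyclicSet B I) (hJ : IsAcyclicSet B J) (hIB : I ⊆ B x ∩ B y)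
    (hJB : J ⊆ B x ∪ B y) :
    R x + R y + ∑ j ∈ I, R j + ∑ j ∈ J, R j ≤ 2 • (T Finset.univ - T ∅) := by
  have hsum {S U : Finset ι} (hS : IsAcyclicSet B S) (hSU : S ⊆ U) :
      ∑ j ∈ S, R j ≤ T U - T ∅ :=
    (hR.sum_le_of_isAcyclicSet hsub hmono hS).trans (sub_le_sub_right (hmono hSU) _)
  calc R x + R y + ∑ j ∈ I, R j + ∑ j ∈ J, R j
      ≤ 2 • T Finset.univ - (T (B x ∩ B y) + T (B x ∪ B y)) + (T (B x ∩ B y) - T ∅)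
          + (T (B x ∪ B y) - T ∅) :=
        add_le_add (add_le_add (hR.add_le_two_nsmul_sub hsub hmono x y) (hsum hI hIB))
          (hsum hJ hJB)
    _ = 2 • (T Finset.univ - T ∅) := by abel

end IndexCoding

/-- **Submodularity consequence for the 5-cycle outer bound**: if `T` is a normalized
(`T ∅ = 0`, `T univ = 1`), monotone, submodular set function on subsets of `Fin 5`, and the
nonnegative reals `R j` satisfy `R j ≤ T {j, j+2, j+3} - T {j+2, j+3}` (indices mod 5),
then `R 0 + R 1 + R 2 + R 3 + R 4 ≤ 2`. -/
theorem five_cycle_submodular_sum_bound (T : Finset (Fin 5) → ℝ)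
    (hempty : T ∅ = 0) (huniv : T Finset.univ = 1)
    (hmono : ∀ J K : Finset (Fin 5), J ⊆ K → T J ≤ T K)
    (hsub : ∀ J K : Finset (Fin 5), T (J ∩ K) + T (J ∪ K) ≤ T J + T K)
    (R : Fin 5 → ℝ) (hR : ∀ j, 0 ≤ R j)
    (h : ∀ j : Fin 5, R j ≤ T {j, j + 2, j + 3} - T {j + 2, j + 3}) :
    R 0 + R 1 + R 2 + R 3 + R 4 ≤ 2 := by
  have hacyclic_singleton : IsAcyclicSet (fun j : Fin 5 ↦ {j + 2, j + 3}) {3} := by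
    unfold IsAcyclicSet; decide
  have hacyclic_pair : IsAcyclicSet (fun j : Fin 5 ↦ {j + 2, j + 3}) {2, 4} := by
    unfold IsAcyclicSet; decide
  have hsum := five_cycle_submodular_sum_bound_general hsub hmono h 0 1
    hacyclic_singleton hacyclic_pair (by decide) (by decide)
  rw [Finset.sum_singleton, Finset.sum_pair (by decide), hempty, huniv, two_nsmul] at hsum
  linarith
end
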